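/- arXiv:2501.06065 — 11 statements merged into one kernel-verified Lean document; each statement's English description precedes it below -/
import Mathlib

section
/- Let x : ℕ → ℝ be defined by x₀ = 1/2 and x_k = 3x_{k-1}(1 - x_{k-1}) for k ≥ 1. Then for every k ≥ 0 one has x_{2k} < x_{2k+2} < 2/3 < x_{2k+3} < x_{2k+1}; in particular the even-indexed subsequence is strictly increasing and bounded above by 2/3, the odd-indexed subsequence is strictly decreasing and bounded below by 2/3, and the full sequence x_k converges to 2/3. -/
open Filter Topology

/-!
Let `f y = r * y * (1 - y)` with `0 < r ≤ 3`, and let `p = 1 - r⁻¹` be its nonzero fixed point.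
Since `f y - p = r * (y - p) * (r⁻¹ - y)`, points to the right of `r⁻¹` are sent across `p`.
Dividing `f (f y) - y` by the factors `y` and `p - y` coming from the fixed points of `f` leaves a
quadratic whose discriminant has the sign of `r - 3`; it is positive, except for a double root at
`p` when `r = 3`. Hence `f ∘ f` moves every positive point other than `p` in the direction of `p`.
This makes the even and odd subsequences of an orbit starting in `(r⁻¹, p)` monotone, and it makes
`p` the only positive fixed point of `f ∘ f`, hence the only possible limit.
-/

theorem tendsto_atTop_of_tendsto_even_of_tendsto_odd {α : Type*} {u : ℕ → α} {l : Filter α}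
    (heven : Tendsto (fun k => u (2 * k)) atTop l)
    (hodd : Tendsto (fun k => u (2 * k + 1)) atTop l) : Tendsto u atTop l := by
  intro s hs
  obtain ⟨N, hN⟩ := eventually_atTop.1 (heven hs)
  obtain ⟨M, hM⟩ := eventually_atTop.1 (hodd hs)
  refine eventually_atTop.2 ⟨2 * (N + M), fun n hn => ?_⟩
  rcases Nat.even_or_odd' n with ⟨k, rfl | rfl⟩
  · exact hN k (by lia)
  · exact hM k (by lia)

/-- The logistic map `y ↦ r * y * (1 - y)`, considered on the whole real line. -/
def logisticMap (r y : ℝ) : ℝ := r * y * (1 - y)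

namespace logisticMap

open Set Function

variable {r y : ℝ}

theorem continuous (r : ℝ) : Continuous (logisticMap r) := by
  unfold logisticMap
  fun_prop

theorem apply_sub_one_sub_inv (hr : r ≠ 0) (y : ℝ) :
    logisticMap r y - (1 - r⁻¹) = r * (y - (1 - r⁻¹)) * (r⁻¹ - y) := by
  unfold logisticMap
  field_simp
  ring

theorem isFixedPt_one_sub_inv (hr : r ≠ 0) : IsFixedPt (logisticMap r) (1 - r⁻¹) := by
  simpa [sub_eq_zero, IsFixedPt] using apply_sub_one_sub_inv hr (1 - r⁻¹)

theorem one_sub_inv_lt_apply (hr : 0 < r) (hy : y ∈ Ioo r⁻¹ (1 - r⁻¹)) :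
    1 - r⁻¹ < logisticMap r y := by
  rw [← sub_pos, apply_sub_one_sub_inv hr.ne']
  exact mul_pos_of_neg_of_neg (mul_neg_of_pos_of_neg hr (sub_neg.2 hy.2)) (sub_neg.2 hy.1)

theorem apply_lt_one_sub_inv (hr : 0 < r) (hy : r⁻¹ < y) (hpy : 1 - r⁻¹ < y) :
    logisticMap r y < 1 - r⁻¹ := by
  rw [← sub_neg, apply_sub_one_sub_inv hr.ne']
  exact mul_neg_of_pos_of_neg (mul_pos hr (sub_pos.2 hpy)) (sub_neg.2 hy)

theorem apply_apply_sub_self (hr : r ≠ 0) (y : ℝ) :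
    logisticMap r (logisticMap r y) - y =
      r * y * (1 - r⁻¹ - y) * ((r * y - (r + 1) / 2) ^ 2 + (r + 1) * (3 - r) / 4) := by
  unfold logisticMap
  field_simp
  ring

theorem quadratic_factor_pos (hr : r ∈ Ioc 0 3) (hy : y ≠ 1 - r⁻¹) :
    0 < (r * y - (r + 1) / 2) ^ 2 + (r + 1) * (3 - r) / 4 := by
  obtain ⟨hr0, hr3⟩ := hr
  rcases hr3.lt_or_eq with hlt | rfl
  · have : 0 < (r + 1) * (3 - r) := mul_pos (by linarith) (by linarith)
    positivity
  · have : 3 * y - (3 + 1) / 2 ≠ 0 := fun h => hy (by linarith)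
    positivity

theorem lt_apply_apply (hr : r ∈ Ioc 0 3) (hy : y ∈ Ioo 0 (1 - r⁻¹)) :
    y < logisticMap r (logisticMap r y) := by
  rw [← sub_pos, apply_apply_sub_self hr.1.ne']
  exact mul_pos (mul_pos (mul_pos hr.1 hy.1) (sub_pos.2 hy.2)) (quadratic_factor_pos hr hy.2.ne)

theorem apply_apply_lt (hr : r ∈ Ioc 0 3) (hy : 0 < y) (hpy : 1 - r⁻¹ < y) :
    logisticMap r (logisticMap r y) < y := by
  rw [← sub_neg, apply_apply_sub_self hr.1.ne']
  exact mul_neg_of_neg_of_pos (mul_neg_of_pos_of_neg (mul_pos hr.1 hy) (sub_neg.2 hpy))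
    (quadratic_factor_pos hr hpy.ne')

theorem eq_one_sub_inv_of_isFixedPt_comp (hr : r ∈ Ioc 0 3) (hy : 0 < y)
    (hfix : IsFixedPt (logisticMap r ∘ logisticMap r) y) : y = 1 - r⁻¹ := by
  rcases lt_trichotomy y (1 - r⁻¹) with hlt | heq | hgt
  · exact absurd hfix (lt_apply_apply hr ⟨hy, hlt⟩).ne'
  · exact heq
  · exact absurd hfix (apply_apply_lt hr hy hgt).ne

theorem mapsTo_comp_Ioo (hr : r ∈ Ioc 0 3) :
    MapsTo (logisticMap r ∘ logisticMap r) (Ioo r⁻¹ (1 - r⁻¹)) (Ioo r⁻¹ (1 - r⁻¹)) := by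
  intro y hy
  have hinv : 0 < r⁻¹ := inv_pos.2 hr.1
  have hp : 1 - r⁻¹ < logisticMap r y := one_sub_inv_lt_apply hr.1 hy
  exact ⟨hy.1.trans (lt_apply_apply hr ⟨hinv.trans hy.1, hy.2⟩),
    apply_lt_one_sub_inv hr.1 ((hy.1.trans hy.2).trans hp) hp⟩

section Orbit

variable {x : ℕ → ℝ} (hr : r ∈ Ioc 0 3) (hx : ∀ k, x (k + 1) = logisticMap r (x k))
  (h0 : x 0 ∈ Ioo r⁻¹ (1 - r⁻¹))

include hr hx h0

theorem even_mem_Ioo (k : ℕ) : x (2 * k) ∈ Ioo r⁻¹ (1 - r⁻¹) := by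
  induction k with
  | zero => exact h0
  | succ k ih =>
    rw [Nat.mul_succ, hx (2 * k + 1), hx (2 * k)]
    exact mapsTo_comp_Ioo hr ih

theorem one_sub_inv_lt_odd (k : ℕ) : 1 - r⁻¹ < x (2 * k + 1) := by
  rw [hx]
  exact one_sub_inv_lt_apply hr.1 (even_mem_Ioo hr hx h0 k)

theorem strictMono_even : StrictMono fun k => x (2 * k) := by
  refine strictMono_nat_of_lt_succ fun k => ?_
  have hk := even_mem_Ioo hr hx h0 k
  rw [Nat.mul_succ, hx (2 * k + 1), hx (2 * k)]
  exact lt_apply_apply hr ⟨(inv_pos.2 hr.1).trans hk.1, hk.2⟩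

theorem strictAnti_odd : StrictAnti fun k => x (2 * k + 1) := by
  refine strictAnti_nat_of_succ_lt fun k => ?_
  have hp : 0 < 1 - r⁻¹ := (inv_pos.2 hr.1).trans (h0.1.trans h0.2)
  have hk := one_sub_inv_lt_odd hr hx h0 k
  rw [Nat.mul_succ, hx (2 * k + 2), hx (2 * k + 1)]
  exact apply_apply_lt hr (hp.trans hk) hk

theorem tendsto_even : Tendsto (fun k => x (2 * k)) atTop (𝓝 (1 - r⁻¹)) := by
  have hmem := even_mem_Ioo hr hx h0
  have hbdd : BddAbove (range fun k => x (2 * k)) :=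
    ⟨1 - r⁻¹, forall_mem_range.2 fun k => (hmem k).2.le⟩
  obtain ⟨l, hl⟩ : ∃ l, Tendsto (fun k => x (2 * k)) atTop (𝓝 l) :=
    ⟨_, tendsto_atTop_ciSup (strictMono_even hr hx h0).monotone hbdd⟩
  have hpos : 0 < l := (inv_pos.2 hr.1).trans_le (ge_of_tendsto' hl fun k => (hmem k).1.le)
  have hcont : Continuous (logisticMap r ∘ logisticMap r) := (continuous r).comp (continuous r)
  have hshift : Tendsto (fun k => logisticMap r (logisticMap r (x (2 * k)))) atTop (𝓝 l) := by
    simpa only [Function.comp_def, Nat.mul_succ, hx] using hl.comp (tendsto_add_atTop_nat 1)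
  have hfix : IsFixedPt (logisticMap r ∘ logisticMap r) l :=
    tendsto_nhds_unique ((hcont.tendsto l).comp hl) hshift
  rwa [← eq_one_sub_inv_of_isFixedPt_comp hr hpos hfix]

theorem tendsto_orbit : Tendsto x atTop (𝓝 (1 - r⁻¹)) := by
  have heven := tendsto_even hr hx h0
  refine tendsto_atTop_of_tendsto_even_of_tendsto_odd heven ?_
  have hodd := ((continuous r).tendsto (1 - r⁻¹)).comp heven
  rw [isFixedPt_one_sub_inv hr.1.ne'] at hodd
  simpa only [Function.comp_def, hx] using hodd

end Orbit

end logisticMap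

theorem stmt_1_general {r : ℝ} (hr : r ∈ Set.Ioc 0 3) (x : ℕ → ℝ)
    (h0 : x 0 ∈ Set.Ioo r⁻¹ (1 - r⁻¹)) (hrec : ∀ k, x (k + 1) = r * x k * (1 - x k)) :
    (∀ k, x (2 * k) < x (2 * k + 2) ∧ x (2 * k + 2) < 1 - r⁻¹ ∧ 1 - r⁻¹ < x (2 * k + 3) ∧
      x (2 * k + 3) < x (2 * k + 1)) ∧
    StrictMono (fun k => x (2 * k)) ∧ (∀ k, x (2 * k) < 1 - r⁻¹) ∧
    StrictAnti (fun k => x (2 * k + 1)) ∧ (∀ k, 1 - r⁻¹ < x (2 * k + 1)) ∧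
    Tendsto x atTop (𝓝 (1 - r⁻¹)) := by
  have hx : ∀ k, x (k + 1) = logisticMap r (x k) := hrec
  have hmono := logisticMap.strictMono_even hr hx h0
  have hanti := logisticMap.strictAnti_odd hr hx h0
  have heven k : x (2 * k) < 1 - r⁻¹ := (logisticMap.even_mem_Ioo hr hx h0 k).2
  have hodd := logisticMap.one_sub_inv_lt_odd hr hx h0
  exact ⟨fun k => ⟨hmono k.lt_succ_self, heven (k + 1), hodd (k + 1), hanti k.lt_succ_self⟩,
    hmono, heven, hanti, hodd, logisticMap.tendsto_orbit hr hx h0⟩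

theorem stmt_1 (x : ℕ → ℝ) (h0 : x 0 = 1/2)
    (hrec : ∀ k, x (k + 1) = 3 * x k * (1 - x k)) :
    (∀ k, x (2*k) < x (2*k+2) ∧ x (2*k+2) < 2/3 ∧ 2/3 < x (2*k+3) ∧
      x (2*k+3) < x (2*k+1)) ∧
    StrictMono (fun k => x (2*k)) ∧ (∀ k, x (2*k) < 2/3) ∧
    StrictAnti (fun k => x (2*k+1)) ∧ (∀ k, 2/3 < x (2*k+1)) ∧
    Tendsto x atTop (𝓝 (2/3)) := by
  have hp : (2 / 3 : ℝ) = 1 - 3⁻¹ := by norm_num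
  rw [hp]
  exact stmt_1_general (by norm_num) x (by norm_num [h0]) hrec
end

section
/- Let x : ℕ → ℝ be defined by x₀ = 1/2 and x_k = 3x_{k-1}(1 - x_{k-1}) for k ≥ 1. Then lim_{k→∞} k^{1/2}·(x_{2k+1} - 2/3) = 1/6 and lim_{k→∞} k^{1/2}·(2/3 - x_{2k}) = 1/6. -/
open Filter Topology

/-!
The fixed point `2/3` of `x ↦ 3x(1 - x)` has multiplier `-1`, so orbits alternate around it. In the
coordinate `t = 2/3 - x`, two steps of the map become `t ↦ t - 18t³ + 27t⁴`, which decreases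
`(0, 1/3)` towards `0`. Along an orbit `tₖ` of such a map, `tₖ⁻²` grows by asymptotically
`2 · 18 = 36` per step, so by Cesàro averaging `tₖ⁻² ~ 36k`, that is, `√k · tₖ → 1/6`.
-/

open Set

theorem mapsTo_Ioo_of_forall_mem_Ioo {α : Type*} [Preorder α] {f : α → α} {a b : α}
    (hf : ∀ s ∈ Ioo a b, f s ∈ Ioo a s) : MapsTo f (Ioo a b) (Ioo a b) :=
  fun s hs => ⟨(hf s hs).1, (hf s hs).2.trans hs.2⟩

theorem tendsto_iterate_of_forall_mem_Ioo {α : Type*} [ConditionallyCompleteLinearOrder α]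
    [TopologicalSpace α] [OrderTopology α] {f : α → α} {a b t : α}
    (hcont : ContinuousOn f (Ioo a b)) (hf : ∀ s ∈ Ioo a b, f s ∈ Ioo a s) (ht : t ∈ Ioo a b) :
    Tendsto (fun n => f^[n] t) atTop (𝓝 a) := by
  have hmem (n : ℕ) : f^[n] t ∈ Ioo a b := (mapsTo_Ioo_of_forall_mem_Ioo hf).iterate n ht
  have hanti : Antitone fun n => f^[n] t := antitone_nat_of_succ_le fun n => by
    rw [Function.iterate_succ_apply']
    exact (hf _ (hmem n)).2.le
  have hlim := tendsto_atTop_ciInf hanti ⟨a, forall_mem_range.2 fun n => (hmem n).1.le⟩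
  set L := ⨅ n, f^[n] t
  have haL : a ≤ L := ge_of_tendsto' hlim fun n => (hmem n).1.le
  have hLb : L < b := (hanti.le_of_tendsto hlim 0).trans_lt ht.2
  obtain rfl | haL := haL.eq_or_lt
  · exact hlim
  · have hfix : f L = L :=
      isFixedPt_of_tendsto_iterate hlim (hcont.continuousAt (Ioo_mem_nhds haL hLb))
    exact absurd hfix (hf L ⟨haL, hLb⟩).2.ne

theorem tendsto_inv_smul_of_tendsto_sub {E : Type*} [NormedAddCommGroup E] [NormedSpace ℝ E]
    {u : ℕ → E} {l : E} (hu : Tendsto (fun n => u (n + 1) - u n) atTop (𝓝 l)) :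
    Tendsto (fun n : ℕ => (n : ℝ)⁻¹ • u n) atTop (𝓝 l) := by
  have hmean : Tendsto (fun n : ℕ => (n : ℝ)⁻¹ • (u n - u 0)) atTop (𝓝 l) := by
    simpa only [Finset.sum_range_sub] using hu.cesaro_smul
  have hinit : Tendsto (fun n : ℕ => (n : ℝ)⁻¹ • u 0) atTop (𝓝 0) := by
    simpa only [zero_smul] using (tendsto_inv_atTop_nhds_zero_nat (𝕜 := ℝ)).smul_const (u 0)
  simpa only [← smul_add, sub_add_cancel, add_zero] using hmean.add hinit

section PowerDecay

variable {p a : ℝ}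

theorem tendsto_rpow_neg_succ_sub_rpow_neg {z : ℕ → ℝ} (hp : 0 < p) (hpos : ∀ n, 0 < z n)
    (hlim : Tendsto z atTop (𝓝 0))
    (hdec : Tendsto (fun n => (z n - z (n + 1)) / z n ^ (p + 1)) atTop (𝓝 a)) :
    Tendsto (fun n => z (n + 1) ^ (-p) - z n ^ (-p)) atTop (𝓝 (p * a)) := by
  set r := fun n => (z n - z (n + 1)) / z n ^ (p + 1) with hr
  set u := fun n => z n ^ p * r n with hu
  set φ : ℝ → ℝ := fun s => (1 - s) ^ (-p) with hφ
  have hstep (n : ℕ) : z (n + 1) = z n * (1 - u n) := by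
    have hz := (hpos n).ne'
    have hzp := (Real.rpow_pos_of_pos (hpos n) p).ne'
    simp only [hu, hr, Real.rpow_add_one hz]
    field_simp
    ring
  have hu_lim : Tendsto u atTop (𝓝 0) := by
    simpa only [Real.zero_rpow hp.ne', zero_mul] using
      (hlim.rpow_const (.inr hp.le)).mul hdec
  have hφ_deriv : HasDerivAt φ p 0 := by
    simpa using ((hasDerivAt_id (0 : ℝ)).const_sub 1).rpow_const (p := -p) (by simp)
  -- `dslope` rather than a difference quotient, since `u n` may vanish.
  have hslope : Tendsto (fun n => dslope φ 0 (u n)) atTop (𝓝 p) := by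
    have hcont := continuousAt_dslope_same.2 hφ_deriv.differentiableAt
    rw [ContinuousAt, dslope_same, hφ_deriv.deriv] at hcont
    exact hcont.comp hu_lim
  refine (hslope.mul hdec).congr fun n => ?_
  have hu_le : 0 ≤ 1 - u n :=
    (pos_of_mul_pos_right (hstep n ▸ hpos (n + 1)) (hpos n).le).le
  have hφ_sub : φ (u n) - 1 = u n * dslope φ 0 (u n) := by
    simpa [hφ] using (sub_smul_dslope φ 0 (u n)).symm
  calc dslope φ 0 (u n) * r n = z n ^ (-p) * (u n * dslope φ 0 (u n)) := by
        have hzp := (Real.rpow_pos_of_pos (hpos n) p).ne'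
        simp only [hu, Real.rpow_neg (hpos n).le]
        field_simp
    _ = z n ^ (-p) * φ (u n) - z n ^ (-p) := by rw [← hφ_sub]; ring
    _ = z (n + 1) ^ (-p) - z n ^ (-p) := by rw [hstep, Real.mul_rpow (hpos n).le hu_le]

theorem tendsto_rpow_mul_of_tendsto_sub_div_rpow {z : ℕ → ℝ} (hp : 0 < p) (ha : a ≠ 0)
    (hpos : ∀ n, 0 < z n) (hlim : Tendsto z atTop (𝓝 0))
    (hdec : Tendsto (fun n => (z n - z (n + 1)) / z n ^ (p + 1)) atTop (𝓝 a)) :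
    Tendsto (fun n : ℕ => (n : ℝ) ^ (1 / p) * z n) atTop (𝓝 ((p * a) ^ (-(1 / p)))) := by
  have hmean : Tendsto (fun n : ℕ => (n : ℝ)⁻¹ * z n ^ (-p)) atTop (𝓝 (p * a)) :=
    tendsto_inv_smul_of_tendsto_sub (tendsto_rpow_neg_succ_sub_rpow_neg hp hpos hlim hdec)
  refine (hmean.rpow_const (.inl (mul_ne_zero hp.ne' ha))).congr fun n => ?_
  have hz : (z n ^ (-p)) ^ (-(1 / p)) = z n := by
    rw [← Real.rpow_mul (hpos n).le, neg_mul_neg, mul_one_div_cancel hp.ne', Real.rpow_one]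
  rw [Real.mul_rpow (by positivity) (Real.rpow_nonneg (hpos n).le _), hz,
    Real.inv_rpow n.cast_nonneg, Real.rpow_neg n.cast_nonneg, inv_inv]

theorem tendsto_rpow_mul_iterate {f : ℝ → ℝ} {b t : ℝ} (hp : 0 < p) (ha : a ≠ 0)
    (hcont : ContinuousOn f (Ioo 0 b)) (hf : ∀ s ∈ Ioo 0 b, f s ∈ Ioo 0 s)
    (hdec : Tendsto (fun s => (s - f s) / s ^ (p + 1)) (𝓝[>] 0) (𝓝 a)) (ht : t ∈ Ioo 0 b) :
    Tendsto (fun n : ℕ => (n : ℝ) ^ (1 / p) * f^[n] t) atTop (𝓝 ((p * a) ^ (-(1 / p)))) := by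
  have hpos (n : ℕ) : 0 < f^[n] t := ((mapsTo_Ioo_of_forall_mem_Ioo hf).iterate n ht).1
  have hlim := tendsto_iterate_of_forall_mem_Ioo hcont hf ht
  refine tendsto_rpow_mul_of_tendsto_sub_div_rpow hp ha hpos hlim ?_
  simp only [Function.iterate_succ_apply']
  exact hdec.comp (tendsto_nhdsWithin_iff.2 ⟨hlim, .of_forall hpos⟩)

end PowerDecay

/-- The second iterate of the logistic map `x ↦ 3x(1 - x)`, in the coordinate `t = 2/3 - x`
centred at its fixed point. -/
def logisticTwoStep (t : ℝ) : ℝ :=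
  t - 18 * t ^ 3 + 27 * t ^ 4

theorem continuous_logisticTwoStep : Continuous logisticTwoStep := by
  unfold logisticTwoStep
  fun_prop

theorem logisticTwoStep_mem_Ioo {t : ℝ} (ht : t ∈ Ioo 0 (1 / 3)) :
    logisticTwoStep t ∈ Ioo 0 t := by
  obtain ⟨ht0, ht1⟩ := ht
  have hfactor : logisticTwoStep t = t * ((1 - 3 * t) * (1 + 3 * t * (1 - 3 * t))) := by
    unfold logisticTwoStep; ring
  have hdecrement : t - logisticTwoStep t = 9 * t ^ 3 * (2 - 3 * t) := by
    unfold logisticTwoStep; ring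
  have h1 : 0 < 1 - 3 * t := by linarith
  have h2 : 0 < 2 - 3 * t := by linarith
  exact ⟨hfactor ▸ by positivity, sub_pos.1 (hdecrement ▸ by positivity)⟩

theorem tendsto_sub_logisticTwoStep_div_rpow :
    Tendsto (fun t => (t - logisticTwoStep t) / t ^ ((2 : ℝ) + 1)) (𝓝[>] 0) (𝓝 18) := by
  have hlin : Tendsto (fun t : ℝ => 18 - 27 * t) (𝓝[>] 0) (𝓝 18) :=
    (Continuous.tendsto' (by fun_prop) 0 18 (by norm_num)).mono_left nhdsWithin_le_nhds
  refine hlin.congr' (eventually_mem_nhdsWithin.mono fun t (ht : 0 < t) => ?_)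
  have hcube : t ^ ((2 : ℝ) + 1) = t ^ 3 := by
    rw [← Real.rpow_natCast]; norm_num
  simp only [hcube, logisticTwoStep]
  field_simp
  ring

theorem tendsto_sqrt_mul_logisticTwoStep_iterate {t : ℝ} (ht : t ∈ Ioo 0 (1 / 3)) :
    Tendsto (fun n : ℕ => (n : ℝ) ^ ((1 : ℝ) / 2) * logisticTwoStep^[n] t) atTop
      (𝓝 (1 / 6)) := by
  have hconst : ((2 : ℝ) * 18) ^ (-((1 : ℝ) / 2)) = 1 / 6 := by
    rw [Real.rpow_neg (by norm_num), ← Real.sqrt_eq_rpow, show (2 : ℝ) * 18 = 6 ^ 2 by norm_num,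
      Real.sqrt_sq (by norm_num), one_div]
  exact hconst ▸ tendsto_rpow_mul_iterate two_pos (by norm_num)
    continuous_logisticTwoStep.continuousOn (fun _ => logisticTwoStep_mem_Ioo)
    tendsto_sub_logisticTwoStep_div_rpow ht

theorem two_thirds_sub_eq_logisticTwoStep_iterate {x : ℕ → ℝ}
    (hrec : ∀ k, x (k + 1) = 3 * x k * (1 - x k)) (k : ℕ) :
    2 / 3 - x (2 * k) = logisticTwoStep^[k] (2 / 3 - x 0) := by
  induction k with
  | zero => rfl
  | succ k ih =>
    rw [Function.iterate_succ_apply', ← ih, mul_add_one, hrec, hrec, logisticTwoStep]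
    ring

theorem stmt_2_general (x : ℕ → ℝ) (h0 : x 0 ∈ Ioo (1 / 3) (2 / 3))
    (hrec : ∀ k, x (k + 1) = 3 * x k * (1 - x k)) :
    Tendsto (fun k : ℕ => (k : ℝ) ^ ((1 : ℝ) / 2) * (x (2 * k + 1) - 2 / 3)) atTop
      (𝓝 (1 / 6)) ∧
    Tendsto (fun k : ℕ => (k : ℝ) ^ ((1 : ℝ) / 2) * (2 / 3 - x (2 * k))) atTop
      (𝓝 (1 / 6)) := by
  have ht : 2 / 3 - x 0 ∈ Ioo 0 (1 / 3) := ⟨by linarith [h0.2], by linarith [h0.1]⟩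
  have heven : Tendsto (fun k : ℕ => (k : ℝ) ^ ((1 : ℝ) / 2) * (2 / 3 - x (2 * k))) atTop
      (𝓝 (1 / 6)) := by
    simpa only [two_thirds_sub_eq_logisticTwoStep_iterate hrec] using
      tendsto_sqrt_mul_logisticTwoStep_iterate ht
  have hlim : Tendsto (fun k => 2 / 3 - x (2 * k)) atTop (𝓝 0) := by
    simpa only [two_thirds_sub_eq_logisticTwoStep_iterate hrec] using
      tendsto_iterate_of_forall_mem_Ioo continuous_logisticTwoStep.continuousOn
        (fun _ => logisticTwoStep_mem_Ioo) ht
  have hodd (k : ℕ) : x (2 * k + 1) - 2 / 3 =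
      (2 / 3 - x (2 * k)) * (1 - 3 * (2 / 3 - x (2 * k))) := by
    rw [hrec]; ring
  have hratio : Tendsto (fun k => 1 - 3 * (2 / 3 - x (2 * k))) atTop (𝓝 1) := by
    simpa only [mul_zero, sub_zero] using (hlim.const_mul 3).const_sub 1
  refine ⟨?_, heven⟩
  simpa only [hodd, mul_assoc, mul_one] using heven.mul hratio

theorem stmt_2 (x : ℕ → ℝ) (h0 : x 0 = 1/2)
    (hrec : ∀ k, x (k + 1) = 3 * x k * (1 - x k)) :
    Tendsto (fun k : ℕ => (k : ℝ)^((1:ℝ)/2) * (x (2*k+1) - 2/3)) atTop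
      (𝓝 (1/6)) ∧
    Tendsto (fun k : ℕ => (k : ℝ)^((1:ℝ)/2) * (2/3 - x (2*k))) atTop
      (𝓝 (1/6)) :=
  stmt_2_general x (by norm_num [h0]) hrec
end

section
/- Let x : ℕ → ℝ be defined by x₀ = 1/2 and x_k = 3x_{k-1}(1 - x_{k-1}) for k ≥ 1. Then lim_{k→∞} k·[(x_{2k+1} - 2/3) - 1/(6·k^{1/2})] = -1/24 and lim_{k→∞} k·[(2/3 - x_{2k}) - 1/(6·k^{1/2})] = 1/24. -/
open Filter Topology

/-!
The point `2/3` is a neutral fixed point of `t ↦ 3t(1 - t)` with multiplier `-1`, so one looks at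
the second iterate: `u k = 2/3 - x (2k)` satisfies `u' = u - a u³ + b u⁴` with `a = 18`, `b = 27`.
Passing to `w = 1/u + b/a` removes the quartic term, in the sense that `w' = w + a/w + o(1/w²)`,
hence `w'² = w² + 2a + o(1/w)`. Summing this relation once gives `w² ∼ 2ak`, so the error is
`o(1/√k)`; summing it again gives `w² = 2ak + o(√k)`, that is, `1/u = √(2ak) - b/a + o(1)`.
Inverting this expansion gives the limit for even indices, and
`x (2k+1) - 2/3 = u k - 3 (u k)²` gives the one for odd indices.
-/

open Asymptotics

/-- The Stolz–Cesàro theorem in little-o form. -/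
theorem isLittleO_of_succ_sub_isLittleO_succ_sub {E : Type*} [NormedAddCommGroup E]
    {s : ℕ → E} {g : ℕ → ℝ} (hmono : Monotone g) (hg : Tendsto g atTop atTop)
    (h : (fun n => s (n + 1) - s n) =o[atTop] fun n => g (n + 1) - g n) : s =o[atTop] g := by
  have hnorm : Tendsto (norm ∘ g) atTop atTop := tendsto_norm_atTop_atTop.comp hg
  have hsum := h.sum_range (fun n => sub_nonneg.2 (hmono n.le_succ)) <| by
    simpa only [Finset.sum_range_sub, ← sub_eq_add_neg] using
      tendsto_atTop_add_const_right _ (-g 0) hg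
  simp only [Finset.sum_range_sub] at hsum
  have hbound : (fun n => g n - g 0) =O[atTop] g :=
    (isBigO_refl g atTop).sub (isLittleO_const_left.2 (Or.inr hnorm)).isBigO
  simpa only [sub_add_cancel] using
    (hsum.trans_isBigO hbound).add (isLittleO_const_left (c := s 0).2 (Or.inr hnorm))

theorem inv_sqrt_isBigO_sqrt_succ_sub_sqrt :
    (fun k : ℕ => (√(k : ℝ))⁻¹) =O[atTop] fun k : ℕ => √((k + 1 : ℕ) : ℝ) - √(k : ℝ) := by
  refine IsBigO.of_bound 3 ?_
  filter_upwards [eventually_ge_atTop 1] with k hk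
  have hk' : (1 : ℝ) ≤ k := by exact_mod_cast hk
  have hpos : 0 < √(k : ℝ) := Real.sqrt_pos.2 (by linarith)
  have hmono : √(k : ℝ) ≤ √((k + 1 : ℕ) : ℝ) := Real.sqrt_le_sqrt (by simp)
  have hle : √((k + 1 : ℕ) : ℝ) ≤ 2 * √(k : ℝ) :=
    Real.sqrt_le_iff.2 ⟨by positivity, by
      rw [mul_pow, Real.sq_sqrt (by positivity)]; push_cast; linarith⟩
  have hconj : (√((k + 1 : ℕ) : ℝ) + √(k : ℝ)) * (√((k + 1 : ℕ) : ℝ) - √(k : ℝ)) = 1 := by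
    rw [← sq_sub_sq, Real.sq_sqrt (by positivity), Real.sq_sqrt (by positivity)]
    push_cast
    ring
  rw [Real.norm_of_nonneg (by positivity), Real.norm_of_nonneg (sub_nonneg.2 hmono),
    inv_le_iff_one_le_mul₀ hpos]
  nlinarith [sub_nonneg.2 hmono]

section ReciprocalRecurrence

variable {w : ℕ → ℝ} {a : ℝ}

theorem succ_sq_sub_sq_isLittleO_inv (hw : Tendsto w atTop atTop)
    (h : (fun k => w (k + 1) - w k - a / w k) =o[atTop] fun k => (w k ^ 2)⁻¹) :
    (fun k => w (k + 1) ^ 2 - w k ^ 2 - 2 * a) =o[atTop] fun k => (w k)⁻¹ := by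
  have hne : ∀ᶠ k in atTop, w k ≠ 0 := hw.eventually_ne_atTop 0
  have hinv : Tendsto (fun k => (w k)⁻¹) atTop (𝓝 0) := tendsto_inv_atTop_zero.comp hw
  set ε : ℕ → ℝ := fun k => (w (k + 1) - w k - a / w k) / (w k ^ 2)⁻¹
  have hε : Tendsto ε atTop (𝓝 0) := h.tendsto_div_nhds_zero
  have hlim : Tendsto (fun k => 2 * ε k + (a + ε k * (w k)⁻¹) ^ 2 * (w k)⁻¹) atTop (𝓝 0) := by
    simpa using (hε.const_mul 2).add ((((hε.mul hinv).const_add a).pow 2).mul hinv)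
  refine (isLittleO_iff_tendsto' (hne.mono fun k hk h0 => absurd h0 (inv_ne_zero hk))).2
    (hlim.congr' ?_)
  filter_upwards [hne] with k hk
  simp only [ε]
  field_simp
  ring

theorem sq_sub_isLittleO_natCast (hw : Tendsto w atTop atTop)
    (h : (fun k => w (k + 1) - w k - a / w k) =o[atTop] fun k => (w k ^ 2)⁻¹) :
    (fun k : ℕ => w k ^ 2 - 2 * a * k) =o[atTop] fun k : ℕ => (k : ℝ) := by
  have hinv : (fun k => (w k)⁻¹) =O[atTop] fun _ => (1 : ℝ) :=
    (tendsto_inv_atTop_zero.comp hw).isBigO_one ℝ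
  refine isLittleO_of_succ_sub_isLittleO_succ_sub Nat.mono_cast tendsto_natCast_atTop_atTop ?_
  refine ((succ_sq_sub_sq_isLittleO_inv hw h).trans_isBigO hinv).congr (fun k => ?_)
    fun k => ?_ <;> push_cast <;> ring

theorem sqrt_natCast_isBigO (ha : a ≠ 0) (hw : Tendsto w atTop atTop)
    (h : (fun k => w (k + 1) - w k - a / w k) =o[atTop] fun k => (w k ^ 2)⁻¹) :
    (fun k : ℕ => √(k : ℝ)) =O[atTop] w := by
  have hscale : (fun k : ℕ => (k : ℝ)) =O[atTop] fun k : ℕ => 2 * a * (k : ℝ) :=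
    isBigO_self_const_mul (by simpa) _ _
  have hequiv : (fun k => w k ^ 2) ~[atTop] fun k : ℕ => 2 * a * (k : ℝ) :=
    (sq_sub_isLittleO_natCast hw h).trans_isBigO hscale
  refine IsBigO.of_pow two_ne_zero ((hscale.trans hequiv.symm.isBigO).congr_left fun k => ?_)
  simp

theorem sq_sub_isLittleO_sqrt (ha : a ≠ 0) (hw : Tendsto w atTop atTop)
    (h : (fun k => w (k + 1) - w k - a / w k) =o[atTop] fun k => (w k ^ 2)⁻¹) :
    (fun k : ℕ => w k ^ 2 - 2 * a * k) =o[atTop] fun k : ℕ => √(k : ℝ) := by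
  have hinv : (fun k => (w k)⁻¹) =O[atTop] fun k : ℕ => (√(k : ℝ))⁻¹ := by
    refine (sqrt_natCast_isBigO ha hw h).inv_rev ?_
    filter_upwards [eventually_gt_atTop 0] with k hk h0
    exact absurd h0 (Real.sqrt_ne_zero'.2 (Nat.cast_pos.2 hk))
  refine isLittleO_of_succ_sub_isLittleO_succ_sub
    (fun m n hmn => Real.sqrt_le_sqrt (Nat.cast_le.2 hmn))
    (Real.tendsto_sqrt_atTop.comp tendsto_natCast_atTop_atTop) ?_
  refine ((succ_sq_sub_sq_isLittleO_inv hw h).trans_isBigO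
    (hinv.trans inv_sqrt_isBigO_sqrt_succ_sub_sqrt)).congr_left fun k => ?_
  push_cast
  ring

theorem tendsto_sub_sqrt_of_succ_sub_isLittleO (ha : 0 < a) (hw : Tendsto w atTop atTop)
    (h : (fun k => w (k + 1) - w k - a / w k) =o[atTop] fun k => (w k ^ 2)⁻¹) :
    Tendsto (fun k : ℕ => w k - √(2 * a * k)) atTop (𝓝 0) := by
  have hsq : (fun k : ℕ => w k ^ 2 - 2 * a * k) =o[atTop] w :=
    (sq_sub_isLittleO_sqrt ha.ne' hw h).trans_isBigO (sqrt_natCast_isBigO ha.ne' hw h)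
  refine squeeze_zero_norm' ?_ hsq.norm_left.tendsto_div_nhds_zero
  filter_upwards [hw.eventually_gt_atTop 0] with k hk
  have hconj : (w k - √(2 * a * k)) * (w k + √(2 * a * k)) = w k ^ 2 - 2 * a * k := by
    rw [mul_comm, ← sq_sub_sq, Real.sq_sqrt (by positivity)]
  rw [le_div_iff₀ hk, ← hconj, norm_mul, Real.norm_of_nonneg (by positivity : 0 ≤ w k + _)]
  gcongr
  exact le_add_of_nonneg_right (Real.sqrt_nonneg _)

end ReciprocalRecurrence

section InverseExpansion

variable {ι : Type*} {l : Filter ι} {t y : ι → ℝ} {a b : ℝ}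

theorem inv_sub_inv_isLittleO_sq (ht : Tendsto t l (𝓝[≠] 0))
    (h : (fun i => y i - (t i - a * t i ^ 3 + b * t i ^ 4)) =o[l] fun i => t i ^ 4) :
    (fun i => (y i)⁻¹ - (t i)⁻¹ - (a * t i - b * t i ^ 2)) =o[l] fun i => t i ^ 2 := by
  obtain ⟨ht0, hne⟩ := tendsto_nhdsWithin_iff.1 ht
  set ε : ι → ℝ := fun i => (y i - (t i - a * t i ^ 3 + b * t i ^ 4)) / t i ^ 4
  have hε : Tendsto ε l (𝓝 0) := h.tendsto_div_nhds_zero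
  set q : ι → ℝ := fun i => 1 - a * t i ^ 2 + (b + ε i) * t i ^ 3
  have hq : Tendsto q l (𝓝 1) := by
    simpa using ((ht0.pow 2).const_mul a).const_sub 1 |>.add ((hε.const_add b).mul (ht0.pow 3))
  have hlim : Tendsto (fun i => (a * (a * t i - (b + ε i) * t i ^ 2) - (b + ε i)) / q i + b) l
      (𝓝 0) := by
    have hnum := (((ht0.const_mul a).sub ((hε.const_add b).mul (ht0.pow 2))).const_mul a).sub
      (hε.const_add b)
    simpa using (hnum.div hq one_ne_zero).add_const b
  refine (isLittleO_iff_tendsto' (hne.mono fun i hi h0 => absurd h0 (pow_ne_zero 2 hi))).2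
    (hlim.congr' ?_)
  filter_upwards [hne, hq.eventually_ne one_ne_zero] with i (hi : t i ≠ 0) hqi
  have hy : y i = t i * q i := by simp only [q, ε]; field_simp; ring
  rw [hy]
  field_simp
  simp only [q]
  ring

theorem sub_div_inv_add_isLittleO_sq (ha : a ≠ 0) (ht : Tendsto t l (𝓝[≠] 0)) :
    (fun i => a * t i - b * t i ^ 2 - a / ((t i)⁻¹ + b / a)) =o[l] fun i => t i ^ 2 := by
  obtain ⟨ht0, hne⟩ := tendsto_nhdsWithin_iff.1 ht
  have hden : Tendsto (fun i => a + b * t i) l (𝓝 a) := by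
    simpa using (ht0.const_mul b).const_add a
  have hlim : Tendsto (fun i => -(b ^ 2 * t i) / (a + b * t i)) l (𝓝 0) := by
    simpa [Pi.div_def] using (ht0.const_mul (b ^ 2)).neg.div hden ha
  refine (isLittleO_iff_tendsto' (hne.mono fun i hi h0 => absurd h0 (pow_ne_zero 2 hi))).2
    (hlim.congr' ?_)
  filter_upwards [hne, hden.eventually_ne ha] with i (hi : t i ≠ 0) hdi
  have hw : (t i)⁻¹ + b / a = (a + b * t i) / (a * t i) := by field_simp
  rw [hw]
  field_simp
  ring

theorem sq_isBigO_inv_inv_add_sq (c : ℝ) (ht : Tendsto t l (𝓝[≠] 0)) :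
    (fun i => t i ^ 2) =O[l] fun i => (((t i)⁻¹ + c) ^ 2)⁻¹ := by
  obtain ⟨ht0, hne⟩ := tendsto_nhdsWithin_iff.1 ht
  have hfactor : Tendsto (fun i => 1 + c * t i) l (𝓝 1) := by
    simpa using (ht0.const_mul c).const_add 1
  have hbound := (isBigO_refl (fun i => (((t i)⁻¹ + c) ^ 2)⁻¹) l).mul
    ((hfactor.pow 2).isBigO_one ℝ)
  refine hbound.congr' ?_ (by simp)
  filter_upwards [hne, hfactor.eventually_ne one_ne_zero] with i (hi : t i ≠ 0) hfi
  have hw : (t i)⁻¹ + c = (1 + c * t i) / t i := by field_simp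
  rw [hw]
  field_simp

end InverseExpansion

section Inversion

variable {ι : Type*} {l : Filter ι} {s v : ι → ℝ} {r d : ℝ}

theorem tendsto_div_of_tendsto_sub_const_mul (hr : r ≠ 0) (hs : Tendsto s l atTop)
    (h : Tendsto (fun i => v i - r * s i) l (𝓝 d)) : Tendsto (fun i => s i / v i) l (𝓝 r⁻¹) := by
  have hlim : Tendsto (fun i => ((v i - r * s i) / s i + r)⁻¹) l (𝓝 r⁻¹) := by
    simpa using ((h.div_atTop hs).add_const r).inv₀ (by simpa)
  refine hlim.congr' ?_
  filter_upwards [hs.eventually_ne_atTop 0] with i hi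
  rw [sub_div, mul_div_cancel_right₀ _ hi, sub_add_cancel, inv_div]

theorem tendsto_sq_mul_inv_sub_inv (hr : r ≠ 0) (hs : Tendsto s l atTop)
    (h : Tendsto (fun i => v i - r * s i) l (𝓝 d)) :
    Tendsto (fun i => s i ^ 2 * ((v i)⁻¹ - (r * s i)⁻¹)) l (𝓝 (-d / r ^ 2)) := by
  have hdiv := tendsto_div_of_tendsto_sub_const_mul hr hs h
  have hlim : Tendsto (fun i => -(v i - r * s i) * (s i / v i) / r) l (𝓝 (-d / r ^ 2)) := by
    convert (h.neg.mul hdiv).div_const r using 2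
    field_simp
  refine hlim.congr' ?_
  filter_upwards [hs.eventually_ne_atTop 0, hdiv.eventually_ne (inv_ne_zero hr)] with i hsi hdi
  have hvi : v i ≠ 0 := (div_ne_zero_iff.1 hdi).2
  field_simp
  ring

end Inversion

section QuarticRecurrence

variable {u : ℕ → ℝ} {a b : ℝ}

theorem tendsto_inv_sub_sqrt_of_quartic_recurrence (ha : 0 < a) (hu : Tendsto u atTop (𝓝[>] 0))
    (h : (fun k => u (k + 1) - (u k - a * u k ^ 3 + b * u k ^ 4)) =o[atTop] fun k => u k ^ 4) :
    Tendsto (fun k : ℕ => (u k)⁻¹ - √(2 * a) * √(k : ℝ)) atTop (𝓝 (-(b / a))) := by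
  have hne : Tendsto u atTop (𝓝[≠] 0) := hu.mono_right (nhdsGT_le_nhdsNE 0)
  have hw : Tendsto (fun k => (u k)⁻¹ + b / a) atTop atTop :=
    tendsto_atTop_add_const_right _ _ hu.inv_tendsto_nhdsGT_zero
  have hstep : (fun k => ((u (k + 1))⁻¹ + b / a) - ((u k)⁻¹ + b / a) - a / ((u k)⁻¹ + b / a))
      =o[atTop] fun k => u k ^ 2 := by
    refine ((inv_sub_inv_isLittleO_sq hne h).add
      (sub_div_inv_add_isLittleO_sq (b := b) ha.ne' hne)).congr_left fun k => ?_
    ring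
  have hlim := tendsto_sub_sqrt_of_succ_sub_isLittleO ha hw
    (hstep.trans_isBigO (sq_isBigO_inv_inv_add_sq _ hne))
  convert hlim.sub_const (b / a) using 2
  · rw [Real.sqrt_mul (by positivity : 0 ≤ 2 * a)]
    ring
  · ring

theorem tendsto_mul_sub_inv_sqrt_of_quartic_recurrence (ha : 0 < a)
    (hu : Tendsto u atTop (𝓝[>] 0))
    (h : (fun k => u (k + 1) - (u k - a * u k ^ 3 + b * u k ^ 4)) =o[atTop] fun k => u k ^ 4) :
    Tendsto (fun k : ℕ => (k : ℝ) * (u k - (√(2 * a) * √(k : ℝ))⁻¹)) atTop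
      (𝓝 (b / (2 * a ^ 2))) := by
  have hlim := tendsto_sq_mul_inv_sub_inv (Real.sqrt_ne_zero'.2 (by positivity))
    (Real.tendsto_sqrt_atTop.comp tendsto_natCast_atTop_atTop)
    (tendsto_inv_sub_sqrt_of_quartic_recurrence ha hu h)
  convert hlim using 2
  · simp
  · rw [Real.sq_sqrt (by positivity)]
    field_simp

theorem tendsto_mul_sq_of_quartic_recurrence (ha : 0 < a) (hu : Tendsto u atTop (𝓝[>] 0))
    (h : (fun k => u (k + 1) - (u k - a * u k ^ 3 + b * u k ^ 4)) =o[atTop] fun k => u k ^ 4) :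
    Tendsto (fun k : ℕ => (k : ℝ) * u k ^ 2) atTop (𝓝 (2 * a)⁻¹) := by
  have hlim := (tendsto_div_of_tendsto_sub_const_mul (Real.sqrt_ne_zero'.2 (by positivity))
    (Real.tendsto_sqrt_atTop.comp tendsto_natCast_atTop_atTop)
    (tendsto_inv_sub_sqrt_of_quartic_recurrence ha hu h)).pow 2
  convert hlim using 2
  · simp [mul_pow]
  · rw [inv_pow, Real.sq_sqrt (by positivity)]

end QuarticRecurrence

theorem tendsto_nhdsGT_zero_of_recurrence {f : ℝ → ℝ} {c : ℝ} (hf : ContinuousOn f (Set.Ioo 0 c))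
    (hmaps : ∀ t ∈ Set.Ioo 0 c, f t ∈ Set.Ioo 0 t) {u : ℕ → ℝ} (h0 : u 0 ∈ Set.Ioo 0 c)
    (hrec : ∀ k, u (k + 1) = f (u k)) : Tendsto u atTop (𝓝[>] 0) := by
  have hmem (k : ℕ) : u k ∈ Set.Ioo 0 c := by
    induction k with
    | zero => exact h0
    | succ k ih => exact hrec k ▸ Set.Ioo_subset_Ioo_right ih.2.le (hmaps _ ih)
  have hanti : Antitone u := antitone_nat_of_succ_le fun k => hrec k ▸ (hmaps _ (hmem k)).2.le
  have hlim := tendsto_atTop_ciInf hanti ⟨0, Set.forall_mem_range.2 fun k => (hmem k).1.le⟩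
  set L := ⨅ k, u k
  have hL0 : 0 ≤ L := ge_of_tendsto' hlim fun k => (hmem k).1.le
  have hLc : L < c := (hanti.le_of_tendsto hlim 0).trans_lt h0.2
  obtain hL | hL := hL0.eq_or_lt
  · exact tendsto_nhdsWithin_iff.2 ⟨hL ▸ hlim, .of_forall fun k => (hmem k).1⟩
  · have hcont : ContinuousAt f L := hf.continuousAt (Ioo_mem_nhds hL hLc)
    have hfix : f L = L := tendsto_nhds_unique (hcont.tendsto.comp hlim)
      (((tendsto_add_atTop_iff_nat 1).2 hlim).congr hrec)
    exact absurd hfix (hmaps L ⟨hL, hLc⟩).2.ne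

theorem quartic_map_mem_Ioo {t : ℝ} (ht : t ∈ Set.Ioo 0 (1 / 3)) :
    t - 18 * t ^ 3 + 27 * t ^ 4 ∈ Set.Ioo 0 t := by
  obtain ⟨h0, h1⟩ := ht
  constructor
  · have hfactor : t - 18 * t ^ 3 + 27 * t ^ 4 = t * (1 - 3 * t) * (1 + 3 * t * (1 - 3 * t)) := by
      ring
    have h3 : 0 < 1 - 3 * t := by linarith
    rw [hfactor]
    positivity
  · have hdrop : 0 < 9 * t ^ 3 * (2 - 3 * t) := mul_pos (by positivity) (by linarith)
    linarith

section Logistic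

variable {x : ℕ → ℝ}

theorem logistic_even_recurrence (hrec : ∀ k, x (k + 1) = 3 * x k * (1 - x k)) (k : ℕ) :
    2 / 3 - x (2 * (k + 1)) =
      (2 / 3 - x (2 * k)) - 18 * (2 / 3 - x (2 * k)) ^ 3 + 27 * (2 / 3 - x (2 * k)) ^ 4 := by
  simp only [mul_add_one, hrec]
  ring

theorem tendsto_two_thirds_sub_logistic_even (h0 : x 0 ∈ Set.Ioo (1 / 3) (2 / 3))
    (hrec : ∀ k, x (k + 1) = 3 * x k * (1 - x k)) :
    Tendsto (fun k => 2 / 3 - x (2 * k)) atTop (𝓝[>] 0) := by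
  refine tendsto_nhdsGT_zero_of_recurrence (f := fun t => t - 18 * t ^ 3 + 27 * t ^ 4)
    (by fun_prop) (fun t ht => quartic_map_mem_Ioo ht) ?_ (logistic_even_recurrence hrec)
  exact ⟨sub_pos.2 h0.2, by linarith [h0.1]⟩

end Logistic

theorem stmt_3_general (x : ℕ → ℝ) (h0 : x 0 ∈ Set.Ioo (1 / 3) (2 / 3))
    (hrec : ∀ k, x (k + 1) = 3 * x k * (1 - x k)) :
    Tendsto (fun k : ℕ => (k : ℝ) *
        ((x (2*k+1) - 2/3) - 1 / (6 * (k : ℝ)^((1:ℝ)/2)))) atTop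
      (𝓝 (-1/24)) ∧
    Tendsto (fun k : ℕ => (k : ℝ) *
        ((2/3 - x (2*k)) - 1 / (6 * (k : ℝ)^((1:ℝ)/2)))) atTop
      (𝓝 (1/24)) := by
  have hzero := tendsto_two_thirds_sub_logistic_even h0 hrec
  have hasymp := (isLittleO_zero (fun k => (2 / 3 - x (2 * k)) ^ 4) atTop).congr_left
    fun k => (sub_eq_zero.2 (logistic_even_recurrence hrec k)).symm
  have hsqrt : √(2 * 18 : ℝ) = 6 := by rw [Real.sqrt_eq_iff_mul_self_eq] <;> norm_num
  have hfirst := tendsto_mul_sub_inv_sqrt_of_quartic_recurrence (by norm_num) hzero hasymp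
  have hsq := tendsto_mul_sq_of_quartic_recurrence (by norm_num) hzero hasymp
  simp only [hsqrt, ← one_div] at hfirst
  have hodd (k : ℕ) :
      x (2 * k + 1) - 2 / 3 = (2 / 3 - x (2 * k)) - 3 * (2 / 3 - x (2 * k)) ^ 2 := by
    rw [hrec]
    ring
  simp only [hodd, ← Real.sqrt_eq_rpow]
  constructor
  · convert hfirst.sub (hsq.const_mul 3) using 2
    · ring
    · norm_num
  · convert hfirst using 2
    norm_num

theorem stmt_3 (x : ℕ → ℝ) (h0 : x 0 = 1/2)
    (hrec : ∀ k, x (k + 1) = 3 * x k * (1 - x k)) :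
    Tendsto (fun k : ℕ => (k : ℝ) *
        ((x (2*k+1) - 2/3) - 1 / (6 * (k : ℝ)^((1:ℝ)/2)))) atTop
      (𝓝 (-1/24)) ∧
    Tendsto (fun k : ℕ => (k : ℝ) *
        ((2/3 - x (2*k)) - 1 / (6 * (k : ℝ)^((1:ℝ)/2)))) atTop
      (𝓝 (1/24)) :=
  stmt_3_general x (by norm_num [h0]) hrec
end

section
/- Let h : ℝ → ℝ be defined by h(t) = t - 18t³ - 27t⁴. Then for every x in the closed interval [0, 1/12], one has 1 - 12·h(x) ≥ 0, 3 - 2·√(1 - 12·h(x)) ≥ 0, and (1/6)·(-1 + √(3 - 2·√(1 - 12·h(x)))) = x; that is, the function x ↦ (1/6)·(-1 + √(3 - 2·√(1 - 12x))) is the inverse of h restricted to [0, 1/12]. -/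
/-!
With `p = 1 - 6 * x - 18 * x ^ 2` one has `1 - 12 * h x = p ^ 2` and `3 - 2 * p = (1 + 6 * x) ^ 2`,
so each square root is a polynomial as soon as `p` and `1 + 6 * x` are nonnegative. Since
`deriv h x = (1 + 6 * x) * p`, this happens exactly between two consecutive critical points of `h`,
namely on the increasing branch `[-1/6, (√3 - 1)/6]`.
-/

theorem one_sub_twelve_mul_quartic_eq_sq {R : Type*} [CommRing R] (x : R) :
    1 - 12 * (x - 18 * x ^ 3 - 27 * x ^ 4) = (1 - 6 * x - 18 * x ^ 2) ^ 2 := by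
  ring

theorem three_sub_two_mul_quadratic_eq_sq {R : Type*} [CommRing R] (x : R) :
    3 - 2 * (1 - 6 * x - 18 * x ^ 2) = (1 + 6 * x) ^ 2 := by
  ring

theorem quadratic_nonneg_of_mem_Icc {x : ℝ} (hx : x ∈ Set.Icc (-1 / 6) ((√3 - 1) / 6)) :
    0 ≤ 1 - 6 * x - 18 * x ^ 2 := by
  have h_nonneg : 0 ≤ 1 + 6 * x := by linarith [hx.1]
  have h_sq : (1 + 6 * x) ^ 2 ≤ 3 := (Real.le_sqrt h_nonneg (by norm_num)).mp (by linarith [hx.2])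
  linarith [three_sub_two_mul_quadratic_eq_sq x]

theorem Icc_zero_one_div_twelve_subset :
    Set.Icc (0 : ℝ) (1 / 12) ⊆ Set.Icc (-1 / 6) ((√3 - 1) / 6) := by
  have three_halves_le_sqrt : 3 / 2 ≤ √3 := Real.le_sqrt_of_sq_le (by norm_num)
  exact Set.Icc_subset_Icc (by norm_num) (by linarith)

theorem stmt_5_general (h : ℝ → ℝ) (hh : ∀ t, h t = t - 18 * t ^ 3 - 27 * t ^ 4) :
    ∀ x ∈ Set.Icc (-1 / 6) ((√3 - 1) / 6),
      1 - 12 * h x ≥ 0 ∧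
      3 - 2 * √(1 - 12 * h x) ≥ 0 ∧
      (1 / 6) * (-1 + √(3 - 2 * √(1 - 12 * h x))) = x := by
  intro x hx
  have inner_eq_sq : 1 - 12 * h x = (1 - 6 * x - 18 * x ^ 2) ^ 2 := by
    rw [hh, one_sub_twelve_mul_quartic_eq_sq]
  have outer_eq_sq : 3 - 2 * √(1 - 12 * h x) = (1 + 6 * x) ^ 2 := by
    rw [inner_eq_sq, Real.sqrt_sq (quadratic_nonneg_of_mem_Icc hx),
      three_sub_two_mul_quadratic_eq_sq]
  refine ⟨inner_eq_sq ▸ sq_nonneg _, outer_eq_sq ▸ sq_nonneg _, ?_⟩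
  rw [outer_eq_sq, Real.sqrt_sq (by linarith [hx.1])]
  ring

theorem stmt_5 (h : ℝ → ℝ) (hh : ∀ t, h t = t - 18 * t^3 - 27 * t^4) :
    ∀ x ∈ Set.Icc (0 : ℝ) (1/12),
      1 - 12 * h x ≥ 0 ∧
      3 - 2 * Real.sqrt (1 - 12 * h x) ≥ 0 ∧
      (1/6) * (-1 + Real.sqrt (3 - 2 * Real.sqrt (1 - 12 * h x))) = x :=
  fun x hx => stmt_5_general h hh x (Icc_zero_one_div_twelve_subset hx)
end

section
/- Let y : ℕ → ℝ be defined by y₀ = 1 and y_k = y_{k-1}/(1 + y_{k-1}·ln(1 + y_{k-1})) for k ≥ 1. Then every y_k is strictly positive, the sequence is strictly decreasing, and y_k converges to 0 as k → ∞. -/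
open Filter Topology

/-!
A continuous map `f` with `a < f x < x` for all `x > a` has no fixed point above `a`. Its orbits
from a point above `a` decrease and are bounded below by `a`, and the limit is a fixed point unless
it is `a` itself. Here `a = 0` and `f x = x / (1 + x * log (1 + x))`.
-/

open Set Function

theorem eq_iterate_of_succ {α : Type*} {f : α → α} {u : ℕ → α} (hu : ∀ n, u (n + 1) = f (u n))
    (n : ℕ) : u n = f^[n] (u 0) := by
  induction n with
  | zero => rfl
  | succ n ih => rw [hu, ih, iterate_succ_apply']

theorem strictAnti_iterate_of_mapsTo {α : Type*} [Preorder α] {f : α → α} {s : Set α} {x : α}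
    (hmaps : MapsTo f s s) (hlt : ∀ z ∈ s, f z < z) (hx : x ∈ s) :
    StrictAnti fun n => f^[n] x :=
  strictAnti_nat_of_succ_lt fun n => by
    rw [iterate_succ_apply']
    exact hlt _ (hmaps.iterate n hx)

theorem tendsto_iterate_of_mapsTo_Ioi {α : Type*} [ConditionallyCompleteLinearOrder α]
    [TopologicalSpace α] [OrderTopology α] {f : α → α} {a x : α}
    (hmaps : MapsTo f (Ioi a) (Ioi a)) (hlt : ∀ z ∈ Ioi a, f z < z)
    (hcont : ContinuousOn f (Ioi a)) (hx : a < x) :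
    Tendsto (fun n => f^[n] x) atTop (𝓝 a) := by
  have hgt (n : ℕ) : a < f^[n] x := hmaps.iterate n hx
  have hlim : Tendsto (fun n => f^[n] x) atTop (𝓝 (⨅ n, f^[n] x)) :=
    tendsto_atTop_ciInf (strictAnti_iterate_of_mapsTo hmaps hlt hx).antitone
      ⟨a, forall_mem_range.2 fun n => (hgt n).le⟩
  obtain heq | hlt_inf := (ge_of_tendsto' hlim fun n => (hgt n).le).eq_or_lt
  · rwa [← heq] at hlim
  · have hfix : IsFixedPt f (⨅ n, f^[n] x) :=
      isFixedPt_of_tendsto_iterate hlim (hcont.continuousAt (Ioi_mem_nhds hlt_inf))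
    exact absurd hfix (hlt _ hlt_inf).ne

theorem stmt_6_general {h : ℝ → ℝ} {y : ℕ → ℝ} (hpos : ∀ x, 0 < x → 0 < h x)
    (hcont : ContinuousOn h (Ioi 0)) (h0 : 0 < y 0)
    (hrec : ∀ k, y (k + 1) = y k / (1 + h (y k))) :
    (∀ k, 0 < y k) ∧ StrictAnti y ∧ Tendsto y atTop (𝓝 0) := by
  let f : ℝ → ℝ := fun x => x / (1 + h x)
  have hden (x : ℝ) (hx : 0 < x) : 1 < 1 + h x := lt_add_of_pos_right 1 (hpos x hx)
  have hmaps : MapsTo f (Ioi 0) (Ioi 0) := fun x hx => div_pos hx (one_pos.trans (hden x hx))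
  have hlt : ∀ x ∈ Ioi 0, f x < x := fun x hx => div_lt_self hx (hden x hx)
  have hf : ContinuousOn f (Ioi 0) :=
    continuousOn_id.div (continuousOn_const.add hcont) fun x hx => (one_pos.trans (hden x hx)).ne'
  have hy : y = fun k => f^[k] (y 0) := funext (eq_iterate_of_succ hrec)
  rw [hy]
  exact ⟨fun k => hmaps.iterate k h0, strictAnti_iterate_of_mapsTo hmaps hlt h0,
    tendsto_iterate_of_mapsTo_Ioi hmaps hlt hf h0⟩

theorem mul_log_one_add_pos {x : ℝ} (hx : 0 < x) : 0 < x * Real.log (1 + x) :=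
  mul_pos hx (Real.log_pos (lt_add_of_pos_right 1 hx))

theorem continuousOn_mul_log_one_add :
    ContinuousOn (fun x : ℝ => x * Real.log (1 + x)) (Ioi (-1)) :=
  continuousOn_id.mul <| (continuousOn_const.add continuousOn_id).log fun _ hx =>
    (neg_lt_iff_pos_add'.1 hx).ne'

theorem stmt_6 (y : ℕ → ℝ) (h0 : y 0 = 1)
    (hrec : ∀ k, y (k + 1) = y k / (1 + y k * Real.log (1 + y k))) :
    (∀ k, 0 < y k) ∧ StrictAnti y ∧ Tendsto y atTop (𝓝 0) :=
  stmt_6_general (fun _ => mul_log_one_add_pos)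
    (continuousOn_mul_log_one_add.mono (Ioi_subset_Ioi (by norm_num))) (h0 ▸ one_pos) hrec
end

section
/- Let y : ℕ → ℝ be defined by y₀ = 1 and y_k = y_{k-1}/(1 + y_{k-1}·ln(1 + y_{k-1})) for k ≥ 1. Then lim_{k→∞} k·(y_k - 1/(√2·k^{1/2})) = 1/4. -/
open Filter Topology

/-! With `z = 1 / y` the recurrence becomes `z (k + 1) = z k + log (1 + 1 / z k)`. Completing the
square, `(z k + 1 / 2) ^ 2` grows by `2 + O(1 / z k ^ 2)` at each step. The error `1 / z k ^ 2` is
negligible against the increment `log (1 + 1 / z k)` of `z` itself, so summing gives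
`(z k + 1 / 2) ^ 2 = 2 * k + o(z k)`, hence `z k = √(2 * k) - 1 / 2 + o(1)`, and inverting yields
the limit `1 / 4`. -/

open Asymptotics Real

lemma isLittleO_of_isLittleO_sub_succ {E : Type*} [NormedAddCommGroup E] {u : ℕ → E} {v : ℕ → ℝ}
    (huv : (fun k => u (k + 1) - u k) =o[atTop] fun k => v (k + 1) - v k)
    (hv_mono : Monotone v) (hv : Tendsto v atTop atTop) : u =o[atTop] v := by
  have hsum := huv.sum_range (fun k => sub_nonneg.2 (hv_mono k.le_succ)) <| by
    simpa only [Finset.sum_range_sub, ← sub_eq_add_neg] using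
      tendsto_atTop_add_const_right atTop (-v 0) hv
  simp only [Finset.sum_range_sub] at hsum
  have hsub : (fun k => v k - v 0) =O[atTop] v :=
    (isBigO_refl v atTop).sub ((isLittleO_const_id_atTop (v 0)).comp_tendsto hv).isBigO
  have hconst : (fun _ => u 0) =o[atTop] v := (isLittleO_const_id_atTop (u 0)).comp_tendsto hv
  simpa only [sub_add_cancel] using (hsum.trans_isBigO hsub).add hconst

section Limits

variable {ι : Type*} {l : Filter ι} {a b : ι → ℝ}

lemma tendsto_sub_sqrt_of_sq_sub_isLittleO (ha : ∀ᶠ i in l, 0 < a i) (hb : ∀ᶠ i in l, 0 ≤ b i)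
    (hab : (fun i => a i ^ 2 - b i) =o[l] a) : Tendsto (fun i => a i - √(b i)) l (𝓝 0) := by
  refine squeeze_zero_norm' ?_ (by simpa only [norm_zero] using hab.tendsto_div_nhds_zero.norm)
  filter_upwards [ha, hb] with i hai hbi
  have hfactor : a i ^ 2 - b i = (a i - √(b i)) * (a i + √(b i)) := by
    linear_combination sq_sqrt hbi
  have hle : a i ≤ |a i + √(b i)| :=
    (le_add_of_nonneg_right (sqrt_nonneg _)).trans (le_abs_self _)
  rw [norm_div, norm_eq_abs, norm_eq_abs, norm_eq_abs, abs_of_pos hai, le_div_iff₀ hai, hfactor,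
    abs_mul]
  gcongr

lemma tendsto_sq_mul_inv_sub_inv_s8 {c : ℝ} (hb : Tendsto b l atTop)
    (hab : Tendsto (fun i => a i - b i) l (𝓝 c)) :
    Tendsto (fun i => b i ^ 2 * ((a i)⁻¹ - (b i)⁻¹)) l (𝓝 (-c)) := by
  have ha : Tendsto a l atTop := by
    simpa only [sub_add_cancel] using hab.add_atTop hb
  have hratio : Tendsto (fun i => 1 - (a i - b i) / a i) l (𝓝 1) := by
    simpa only [sub_zero] using (hab.div_atTop ha).const_sub 1
  have hprod := hratio.mul hab.neg
  rw [one_mul] at hprod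
  refine hprod.congr' ?_
  filter_upwards [ha.eventually_ne_atTop 0, hb.eventually_ne_atTop 0] with i hai hbi
  field_simp
  ring

end Limits

lemma tendsto_sqrt_const_mul_natCast_atTop {c : ℝ} (hc : 0 < c) :
    Tendsto (fun k : ℕ => √(c * k)) atTop atTop :=
  tendsto_sqrt_atTop.comp (tendsto_natCast_atTop_atTop.const_mul_atTop hc)

lemma log_le_half_sub_inv {x : ℝ} (hx : 1 ≤ x) : log x ≤ (x - x⁻¹) / 2 := by
  rw [← sinh_log (by positivity)]
  exact self_le_sinh_iff.2 (log_nonneg hx)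

lemma sq_add_two_le_sq_add_log_one_add_inv {t : ℝ} (ht : 0 < t) :
    (t + 1 / 2) ^ 2 + 2 ≤ (t + log (1 + t⁻¹) + 1 / 2) ^ 2 := by
  have hlog := le_log_one_add_of_nonneg (inv_pos.2 ht).le
  have hcross : 2 ≤ log (1 + t⁻¹) * (2 * t + 1) :=
    calc 2 = 2 * t⁻¹ / (t⁻¹ + 2) * (2 * t + 1) := by field_simp; ring
      _ ≤ log (1 + t⁻¹) * (2 * t + 1) := by gcongr
  linarith [sq_nonneg (log (1 + t⁻¹))]

lemma sq_add_log_one_add_inv_le {t : ℝ} (ht : 0 < t) :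
    (t + log (1 + t⁻¹) + 1 / 2) ^ 2 ≤ (t + 1 / 2) ^ 2 + 2 + 3 / 2 * t⁻¹ ^ 2 := by
  have hinv : 0 < t⁻¹ := inv_pos.2 ht
  have hlog_nonneg : 0 ≤ log (1 + t⁻¹) := log_nonneg (by linarith)
  have hlog_le : log (1 + t⁻¹) ≤ t⁻¹ := by
    linarith [log_le_sub_one_of_pos (show 0 < 1 + t⁻¹ by positivity)]
  have hcross : log (1 + t⁻¹) * (2 * t + 1) ≤ 2 + t⁻¹ ^ 2 / 2 :=
    calc log (1 + t⁻¹) * (2 * t + 1)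
        ≤ (1 + t⁻¹ - (1 + t⁻¹)⁻¹) / 2 * (2 * t + 1) := by
          gcongr
          exact log_le_half_sub_inv (by linarith)
      _ = 2 + t⁻¹ ^ 2 / (2 * (1 + t⁻¹)) := by field_simp; ring
      _ ≤ 2 + t⁻¹ ^ 2 / 2 := by gcongr; linarith
  have hsq : log (1 + t⁻¹) ^ 2 ≤ t⁻¹ ^ 2 := by gcongr
  linarith

lemma isBigO_inv_log_one_add_inv :
    (fun t : ℝ => t⁻¹) =O[atTop] fun t => log (1 + t⁻¹) := by
  refine IsBigO.of_bound 2 ?_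
  filter_upwards [eventually_ge_atTop 1] with t ht
  have hinv : 0 < t⁻¹ := by positivity
  have hinv_le : t⁻¹ ≤ 1 := inv_le_one_of_one_le₀ ht
  have hlog : 2 * t⁻¹ / (t⁻¹ + 2) ≤ log (1 + t⁻¹) := le_log_one_add_of_nonneg hinv.le
  rw [norm_of_nonneg hinv.le, norm_of_nonneg (log_nonneg (by linarith))]
  calc t⁻¹ ≤ 2 * (2 * t⁻¹ / (t⁻¹ + 2)) := by
        rw [mul_div_assoc', le_div_iff₀ (by positivity)]
        nlinarith
    _ ≤ 2 * log (1 + t⁻¹) := by gcongr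

lemma isLittleO_sq_add_log_one_add_inv_sub :
    (fun t : ℝ => (t + log (1 + t⁻¹) + 1 / 2) ^ 2 - (t + 1 / 2) ^ 2 - 2) =o[atTop]
      fun t => log (1 + t⁻¹) := by
  have hdefect : (fun t : ℝ => (t + log (1 + t⁻¹) + 1 / 2) ^ 2 - (t + 1 / 2) ^ 2 - 2) =O[atTop]
      fun t => t⁻¹ ^ 2 := by
    refine IsBigO.of_bound (3 / 2) ?_
    filter_upwards [eventually_gt_atTop 0] with t ht
    rw [norm_of_nonneg (by linarith [sq_add_two_le_sq_add_log_one_add_inv ht]),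
      norm_of_nonneg (sq_nonneg _)]
    linarith [sq_add_log_one_add_inv_le ht]
  have hsq : (fun t : ℝ => t⁻¹ ^ 2) =o[atTop] fun t => t⁻¹ :=
    (isLittleO_pow_id one_lt_two).comp_tendsto tendsto_inv_atTop_zero
  exact (hdefect.trans_isLittleO hsq).trans_isBigO isBigO_inv_log_one_add_inv

/-- The orbits of `t ↦ t + log (1 + t⁻¹)` on the positive reals. The reciprocals of the sequence
under study form such an orbit, and so are studied in place of the sequence itself. -/
structure IsLogOneAddInvOrbit (z : ℕ → ℝ) : Prop where
  pos : ∀ k, 0 < z k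
  succ_eq : ∀ k, z (k + 1) = z k + log (1 + (z k)⁻¹)

namespace IsLogOneAddInvOrbit

variable {z : ℕ → ℝ} (hz : IsLogOneAddInvOrbit z)

include hz

lemma monotone : Monotone z :=
  monotone_nat_of_le_succ fun k => by
    rw [hz.succ_eq k]
    exact le_add_of_nonneg_right (log_nonneg (le_add_of_nonneg_right (inv_pos.2 (hz.pos k)).le))

lemma two_mul_le_sq (k : ℕ) : 2 * (k : ℝ) ≤ (z k + 1 / 2) ^ 2 := by
  induction k with
  | zero => simpa only [Nat.cast_zero, mul_zero] using sq_nonneg (z 0 + 1 / 2)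
  | succ k ih =>
    rw [hz.succ_eq k]
    push_cast
    linarith [sq_add_two_le_sq_add_log_one_add_inv (hz.pos k)]

lemma tendsto_atTop : Tendsto z atTop atTop := by
  have hsqrt : Tendsto (fun k : ℕ => √(2 * k) + -(1 / 2)) atTop atTop :=
    tendsto_atTop_add_const_right _ _ (tendsto_sqrt_const_mul_natCast_atTop two_pos)
  refine tendsto_atTop_mono (fun k => ?_) hsqrt
  have hroot : √(2 * k) ≤ z k + 1 / 2 :=
    (sqrt_le_left (by linarith [hz.pos k])).2 (hz.two_mul_le_sq k)
  linarith

lemma sq_sub_two_mul_isLittleO :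
    (fun k : ℕ => (z k + 1 / 2) ^ 2 - 2 * k) =o[atTop] z := by
  refine isLittleO_of_isLittleO_sub_succ ?_ hz.monotone hz.tendsto_atTop
  refine (isLittleO_sq_add_log_one_add_inv_sub.comp_tendsto hz.tendsto_atTop).congr
    (fun k => ?_) fun k => ?_
  · simp only [Function.comp_apply, hz.succ_eq k]
    push_cast
    ring
  · simp only [Function.comp_apply, hz.succ_eq k, add_sub_cancel_left]

lemma tendsto_sub_sqrt : Tendsto (fun k : ℕ => z k - √(2 * k)) atTop (𝓝 (-(1 / 2))) := by
  have hshift : z =O[atTop] fun k => z k + 1 / 2 := by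
    refine IsBigO.of_norm_le fun k => ?_
    rw [norm_of_nonneg (hz.pos k).le]
    exact le_add_of_nonneg_right one_half_pos.le
  have hlim : Tendsto (fun k : ℕ => z k + 1 / 2 - √(2 * k)) atTop (𝓝 0) :=
    tendsto_sub_sqrt_of_sq_sub_isLittleO
      (Eventually.of_forall fun k => add_pos (hz.pos k) one_half_pos)
      (Eventually.of_forall fun k => by positivity)
      (hz.sq_sub_two_mul_isLittleO.trans_isBigO hshift)
  convert hlim.sub_const (1 / 2) using 2 <;> ring

end IsLogOneAddInvOrbit

lemma isLogOneAddInvOrbit_inv {y : ℕ → ℝ} (h0 : 0 < y 0)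
    (hrec : ∀ k, y (k + 1) = y k / (1 + y k * log (1 + y k))) :
    IsLogOneAddInvOrbit fun k => (y k)⁻¹ := by
  have hpos (k : ℕ) : 0 < y k := by
    induction k with
    | zero => exact h0
    | succ k ih =>
      have hlog : 0 < log (1 + y k) := log_pos (lt_add_of_pos_right 1 ih)
      rw [hrec k]
      positivity
  refine ⟨fun k => inv_pos.2 (hpos k), fun k => ?_⟩
  have hk : y k ≠ 0 := (hpos k).ne'
  rw [hrec k, inv_div, inv_inv]
  field_simp

theorem stmt_8_general (y : ℕ → ℝ) (h0 : 0 < y 0)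
    (hrec : ∀ k, y (k + 1) = y k / (1 + y k * Real.log (1 + y k))) :
    Tendsto (fun k : ℕ => (k : ℝ) *
        (y k - 1 / (Real.sqrt 2 * (k : ℝ)^((1:ℝ)/2)))) atTop (𝓝 (1/4)) := by
  have hlim := (tendsto_sq_mul_inv_sub_inv_s8 (tendsto_sqrt_const_mul_natCast_atTop two_pos)
    (isLogOneAddInvOrbit_inv h0 hrec).tendsto_sub_sqrt).div_const 2
  convert hlim using 2 with k
  · rw [sq_sqrt (by positivity), inv_inv, sqrt_mul zero_le_two, sqrt_eq_rpow (k : ℝ), one_div]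
    ring
  · norm_num

theorem stmt_8 (y : ℕ → ℝ) (h0 : y 0 = 1)
    (hrec : ∀ k, y (k + 1) = y k / (1 + y k * Real.log (1 + y k))) :
    Tendsto (fun k : ℕ => (k : ℝ) *
        (y k - 1 / (Real.sqrt 2 * (k : ℝ)^((1:ℝ)/2)))) atTop (𝓝 (1/4)) :=
  stmt_8_general y (h0 ▸ one_pos) hrec
end

section
/- Let y : ℕ → ℝ be defined by y₀ = 1 and y_k = y_{k-1}/(1 + y_{k-1}·ln(1 + y_{k-1})) for k ≥ 1. Then the limit C = lim_{k→∞} k^{3/2}·[y_k - (1/(√2·k^{1/2}) + 1/(4k) - (7/(48√2))·ln(k)/k^{3/2})] exists as a real number. -/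
open Filter Topology

/-!
Put `x = 1 / y`, so that `x (k + 1) = x k + log (1 + 1 / x k)`, where
`log (1 + u) = u + a * u ^ 2 + b * u ^ 3 + O(u ^ 4)` with `a = -1 / 2` and `b = 1 / 3`. The
increments of `x ^ 2` tend to `2`, so `x k` grows like `√(2 * k)`. The lower-order terms of these
increments are cancelled up to `O(1 / x ^ 3)`, which is summable, by passing from `x ^ 2` to
`x ^ 2 - 2 * a * x + (2 * a ^ 2 - 2 * b - 1) * log x`; this quantity is therefore
`2 * k + D + o(1)` for some constant `D`. Solving for `1 / x` gives the expansion.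
-/

open Asymptotics

section LogTaylor

lemma isBigO_log_one_add_add_sum_range (n : ℕ) :
    (fun u : ℝ => Real.log (1 + u) + ∑ i ∈ Finset.range n, (-u) ^ (i + 1) / (i + 1))
      =O[𝓝 0] fun u => u ^ (n + 1) := by
  refine IsBigO.of_bound 2 ?_
  filter_upwards [Metric.ball_mem_nhds (0 : ℝ) one_half_pos] with u hu
  have hu_half : |u| < 1 / 2 := by simpa using hu
  have hbound := Real.abs_log_sub_add_sum_range_le (x := -u) (by rw [abs_neg]; linarith) n
  rw [sub_neg_eq_add, abs_neg] at hbound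
  calc ‖Real.log (1 + u) + ∑ i ∈ Finset.range n, (-u) ^ (i + 1) / (i + 1)‖
      ≤ |u| ^ (n + 1) / (1 - |u|) := by rwa [add_comm]
    _ ≤ |u| ^ (n + 1) / (1 / 2) := by gcongr; linarith
    _ = 2 * ‖u ^ (n + 1)‖ := by rw [Real.norm_eq_abs, abs_pow]; ring

lemma isBigO_log_one_add_sub_self :
    (fun u : ℝ => Real.log (1 + u) - u) =O[𝓝 0] fun u => u ^ 2 :=
  (isBigO_log_one_add_add_sum_range 1).congr_left fun u => by simp [sub_eq_add_neg]

lemma isBigO_log_one_add_sub_cubic :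
    (fun u : ℝ => Real.log (1 + u) - (u + -1 / 2 * u ^ 2 + 1 / 3 * u ^ 3)) =O[𝓝 0]
      fun u => u ^ 4 := by
  refine (isBigO_log_one_add_add_sum_range 3).congr_left fun u => ?_
  simp only [Finset.sum_range_succ, Finset.sum_range_zero]
  push_cast
  ring

end LogTaylor

section Increments

lemma tendsto_div_natCast_of_tendsto_succ_sub {w : ℕ → ℝ} {c : ℝ}
    (hw : Tendsto (fun k => w (k + 1) - w k) atTop (𝓝 c)) :
    Tendsto (fun k => w k / k) atTop (𝓝 c) := by
  have hmean := hw.cesaro.add (tendsto_const_div_atTop_nhds_zero_nat (w 0))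
  rw [add_zero] at hmean
  refine hmean.congr fun k => ?_
  rw [Finset.sum_range_sub]
  ring

lemma exists_tendsto_sub_mul_natCast {w : ℕ → ℝ} {c p : ℝ} (hp : p < -1)
    (hw : (fun k => w (k + 1) - w k - c) =O[atTop] fun k : ℕ => (k : ℝ) ^ p) :
    ∃ D, Tendsto (fun k => w k - c * k) atTop (𝓝 D) := by
  have hsum := (summable_of_isBigO_nat (Real.summable_nat_rpow.2 hp) hw).hasSum.tendsto_sum_nat
  refine ⟨_, (hsum.add_const (w 0)).congr fun k => ?_⟩
  rw [Finset.sum_sub_distrib, Finset.sum_range_sub, Finset.sum_const, Finset.card_range,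
    nsmul_eq_mul]
  ring

lemma isBigO_rpow_of_tendsto_sq_div_natCast {x : ℕ → ℝ} {c : ℝ} (hc : c ≠ 0)
    (hpos : ∀ᶠ k in atTop, 0 < x k) (hx : Tendsto (fun k => x k ^ 2 / k) atTop (𝓝 c)) :
    (fun k => (x k)⁻¹ ^ 3) =O[atTop] fun k : ℕ => (k : ℝ) ^ (-(3 / 2) : ℝ) := by
  have hratio : Tendsto (fun k => (x k ^ 2)⁻¹ / (k : ℝ)⁻¹) atTop (𝓝 c⁻¹) :=
    (hx.inv₀ hc).congr fun k => by rw [inv_div, inv_div_inv]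
  have hsq : (fun k => (x k ^ 2)⁻¹) =O[atTop] fun k : ℕ => (k : ℝ)⁻¹ := by
    refine isBigO_of_div_tendsto_nhds ?_ _ hratio
    filter_upwards [eventually_ne_atTop 0] with k hk hk_inv
    exact absurd hk_inv (by positivity)
  refine (hsq.rpow (by norm_num : (0 : ℝ) ≤ 3 / 2) (.of_forall fun k => by positivity)).congr' ?_ ?_
  · filter_upwards [hpos] with k hk
    rw [← inv_pow, ← Real.rpow_natCast_mul (by positivity), ← Real.rpow_natCast]
    norm_num
  · filter_upwards with k
    rw [Real.inv_rpow k.cast_nonneg, Real.rpow_neg k.cast_nonneg]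

variable {ι : Type*} {l : Filter ι} {x d : ι → ℝ} {a b : ℝ}

/-- The combination of `x ^ 2`, `x` and `log x` whose increment is `2 + O(x⁻¹ ^ 3)` when `x`
increases by `x⁻¹ + a * x⁻¹ ^ 2 + b * x⁻¹ ^ 3 + O(x⁻¹ ^ 4)`. -/
noncomputable def correctedSq (a b x : ℝ) : ℝ :=
  x ^ 2 - 2 * a * x + (2 * a ^ 2 - 2 * b - 1) * Real.log x

lemma isBigO_pow_of_sub_mul_pow {u : ι → ℝ} {c : ℝ} {n : ℕ} (hu : Tendsto u l (𝓝 0))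
    (hd : (fun i => d i - c * u i ^ n) =O[l] fun i => u i ^ (n + 1)) :
    d =O[l] fun i => u i ^ n := by
  have hpow : (fun i => u i ^ (n + 1)) =O[l] fun i => u i ^ n :=
    (isLittleO_pow_pow n.lt_succ_self).isBigO.comp_tendsto hu
  refine ((hd.trans hpow).add ((isBigO_refl _ l).const_mul_left c)).congr_left fun i => ?_
  exact sub_add_cancel _ _

lemma isBigO_sub_quadratic_of_cubic {u : ι → ℝ} (hu : Tendsto u l (𝓝 0))
    (hd : (fun i => d i - (u i + a * u i ^ 2 + b * u i ^ 3)) =O[l] fun i => u i ^ 4) :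
    (fun i => d i - (u i + a * u i ^ 2)) =O[l] fun i => u i ^ 3 :=
  isBigO_pow_of_sub_mul_pow hu (hd.congr_left fun i => (sub_sub (d i) _ (b * _)).symm)

lemma isBigO_sub_linear_of_quadratic {u : ι → ℝ} (hu : Tendsto u l (𝓝 0))
    (hd : (fun i => d i - (u i + a * u i ^ 2)) =O[l] fun i => u i ^ 3) :
    (fun i => d i - u i) =O[l] fun i => u i ^ 2 :=
  isBigO_pow_of_sub_mul_pow hu (hd.congr_left fun i => (sub_sub (d i) _ (a * _)).symm)

lemma isBigO_of_sub_linear {u : ι → ℝ} (hu : Tendsto u l (𝓝 0))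
    (hd : (fun i => d i - u i) =O[l] fun i => u i ^ 2) : d =O[l] u := by
  simpa using isBigO_pow_of_sub_mul_pow (c := 1) (n := 1) hu (by simpa using hd)

lemma isBigO_mul_of_inv_pow_succ {n : ℕ} (hx : ∀ᶠ i in l, x i ≠ 0)
    (hd : d =O[l] fun i => (x i)⁻¹ ^ (n + 1)) :
    (fun i => x i * d i) =O[l] fun i => (x i)⁻¹ ^ n := by
  refine ((isBigO_refl x l).mul hd).congr' .rfl ?_
  filter_upwards [hx] with i hi
  rw [pow_succ', mul_inv_cancel_left₀ hi]

lemma tendsto_add_sq_sub_sq (hx : Tendsto x l atTop)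
    (hd : (fun i => d i - (x i)⁻¹) =O[l] fun i => (x i)⁻¹ ^ 2) :
    Tendsto (fun i => (x i + d i) ^ 2 - x i ^ 2) l (𝓝 2) := by
  have hu : Tendsto (fun i => (x i)⁻¹) l (𝓝 0) := tendsto_inv_atTop_zero.comp hx
  have hd_zero : Tendsto d l (𝓝 0) := (isBigO_of_sub_linear hu hd).trans_tendsto hu
  have hxd_sub : Tendsto (fun i => x i * (d i - (x i)⁻¹)) l (𝓝 0) :=
    (isBigO_mul_of_inv_pow_succ (n := 1) (hx.eventually_ne_atTop 0) hd).trans_tendsto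
      (by simpa only [pow_one] using hu)
  have hsum := ((hxd_sub.const_mul 2).add (hd_zero.pow 2)).add_const 2
  norm_num at hsum
  refine hsum.congr' ?_
  filter_upwards [hx.eventually_ne_atTop 0] with i hi
  field_simp
  ring

lemma isBigO_log_add_sub_log (hx : Tendsto x l atTop) (hd : d =O[l] fun i => (x i)⁻¹) :
    (fun i => Real.log (x i + d i) - Real.log (x i) - d i * (x i)⁻¹) =O[l]
      fun i => (x i)⁻¹ ^ 4 := by
  have hu : Tendsto (fun i => (x i)⁻¹) l (𝓝 0) := tendsto_inv_atTop_zero.comp hx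
  have hdu : Tendsto (fun i => d i * (x i)⁻¹) l (𝓝 0) := by
    simpa using (hd.trans_tendsto hu).mul hu
  have htaylor := isBigO_log_one_add_sub_self.comp_tendsto hdu
  have hsq : (fun i => (d i * (x i)⁻¹) ^ 2) =O[l] fun i => (x i)⁻¹ ^ 4 :=
    ((hd.mul (isBigO_refl _ l)).pow 2).congr_right fun i => by ring
  refine (htaylor.trans hsq).congr' ?_ .rfl
  filter_upwards [hx.eventually_gt_atTop 0, hdu.eventually_const_lt neg_one_lt_zero] with i hi hdi
  have hfactor : x i + d i = x i * (1 + d i * (x i)⁻¹) := by field_simp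
  rw [Function.comp_apply, hfactor, Real.log_mul hi.ne' (by linarith)]
  ring

lemma isBigO_correctedSq_add_sub (hx : Tendsto x l atTop)
    (hd : (fun i => d i - ((x i)⁻¹ + a * (x i)⁻¹ ^ 2 + b * (x i)⁻¹ ^ 3)) =O[l]
      fun i => (x i)⁻¹ ^ 4) :
    (fun i => correctedSq a b (x i + d i) - correctedSq a b (x i) - 2) =O[l]
      fun i => (x i)⁻¹ ^ 3 := by
  have hu : Tendsto (fun i => (x i)⁻¹) l (𝓝 0) := tendsto_inv_atTop_zero.comp hx
  have hquad := isBigO_sub_quadratic_of_cubic hu hd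
  have hlin := isBigO_sub_linear_of_quadratic hu hquad
  have hd_inv := isBigO_of_sub_linear hu hlin
  have hremainder := isBigO_mul_of_inv_pow_succ (n := 3) (hx.eventually_ne_atTop 0) hd
  have hsq : (fun i => (d i - (x i)⁻¹) * (d i + (x i)⁻¹)) =O[l] fun i => (x i)⁻¹ ^ 3 :=
    (hlin.mul (hd_inv.add (isBigO_refl _ l))).congr_right fun i => (pow_succ _ 2).symm
  have hlin_mul : (fun i => (d i - (x i)⁻¹) * (x i)⁻¹) =O[l] fun i => (x i)⁻¹ ^ 3 :=
    (hlin.mul (isBigO_refl _ l)).congr_right fun i => (pow_succ _ 2).symm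
  have hlog : (fun i => Real.log (x i + d i) - Real.log (x i) - d i * (x i)⁻¹) =O[l]
      fun i => (x i)⁻¹ ^ 3 :=
    (isBigO_log_add_sub_log hx hd_inv).trans
      ((isLittleO_pow_pow (show 3 < 4 by norm_num)).isBigO.comp_tendsto hu)
  -- The coefficients in `correctedSq` cancel the multiples of `x⁻¹` and `x⁻¹ ^ 2`, so that the
  -- increment minus `2` is a linear combination of these errors.
  refine ((((hremainder.const_mul_left 2).add hsq).add (hquad.const_mul_left (-2 * a))).add
    ((hlin_mul.add hlog).const_mul_left (2 * a ^ 2 - 2 * b - 1))).congr' ?_ .rfl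
  filter_upwards [hx.eventually_ne_atTop 0] with i hi
  simp only [correctedSq]
  field_simp
  ring

theorem exists_tendsto_correctedSq_sub_two_mul {x : ℕ → ℝ} (hx : Tendsto x atTop atTop)
    (hstep : (fun k => x (k + 1) - x k - ((x k)⁻¹ + a * (x k)⁻¹ ^ 2 + b * (x k)⁻¹ ^ 3)) =O[atTop]
      fun k => (x k)⁻¹ ^ 4) :
    ∃ D, Tendsto (fun k => correctedSq a b (x k) - 2 * k) atTop (𝓝 D) := by
  have hu : Tendsto (fun k => (x k)⁻¹) atTop (𝓝 0) := tendsto_inv_atTop_zero.comp hx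
  have hsq_step := tendsto_add_sq_sub_sq hx
    (isBigO_sub_linear_of_quadratic hu (isBigO_sub_quadratic_of_cubic hu hstep))
  have hincrement := isBigO_correctedSq_add_sub hx hstep
  simp only [add_sub_cancel] at hsq_step hincrement
  have hsq : Tendsto (fun k => x k ^ 2 / k) atTop (𝓝 2) :=
    tendsto_div_natCast_of_tendsto_succ_sub hsq_step
  exact exists_tendsto_sub_mul_natCast (by norm_num)
    (hincrement.trans
      (isBigO_rpow_of_tendsto_sq_div_natCast two_ne_zero (hx.eventually_gt_atTop 0) hsq))

end Increments

section Inversion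

variable {ι : Type*} {l : Filter ι} {x s : ι → ℝ} {α β D : ℝ}

lemma tendsto_sq_sub_sq_div_self (hx : Tendsto x l atTop)
    (hD : Tendsto (fun i => x i ^ 2 + α * x i + β * Real.log (x i) - s i ^ 2) l (𝓝 D)) :
    Tendsto (fun i => (s i ^ 2 - x i ^ 2) / x i) l (𝓝 α) := by
  have hlog : Tendsto (fun i => Real.log (x i) / x i) l (𝓝 0) :=
    Real.isLittleO_log_id_atTop.tendsto_div_nhds_zero.comp hx
  have hlim := ((hlog.const_mul β).sub (hD.div_atTop hx)).const_add α
  rw [mul_zero, sub_zero, add_zero] at hlim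
  refine hlim.congr' ?_
  filter_upwards [hx.eventually_ne_atTop 0] with i hi
  field_simp
  ring

lemma tendsto_div_one_of_sq_sub_sq_div (hx : Tendsto x l atTop) (hs : ∀ᶠ i in l, 0 < s i)
    (h : Tendsto (fun i => (s i ^ 2 - x i ^ 2) / x i) l (𝓝 α)) :
    Tendsto (fun i => s i / x i) l (𝓝 1) := by
  have hsqrt := ((h.div_atTop hx).const_add 1).sqrt
  rw [add_zero, Real.sqrt_one] at hsqrt
  refine hsqrt.congr' ?_
  filter_upwards [hs, hx.eventually_gt_atTop 0] with i hsi hxi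
  rw [← Real.sqrt_sq (div_pos hsi hxi).le]
  congr 1
  field_simp
  ring

lemma tendsto_sub_of_sq_sub_sq_div (hx : Tendsto x l atTop) (hs : ∀ᶠ i in l, 0 < s i)
    (h : Tendsto (fun i => (s i ^ 2 - x i ^ 2) / x i) l (𝓝 α)) :
    Tendsto (fun i => s i - x i) l (𝓝 (α / 2)) := by
  have hsx := tendsto_div_one_of_sq_sub_sq_div hx hs h
  have hlim := h.div (hsx.add_const 1) (by norm_num)
  rw [one_add_one_eq_two] at hlim
  refine hlim.congr' ?_
  filter_upwards [hs, hx.eventually_gt_atTop 0] with i hsi hxi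
  simp only [Pi.div_apply]
  field_simp
  ring

theorem tendsto_inv_expansion_of_tendsto_sq_expansion (hx : Tendsto x l atTop)
    (hs : ∀ᶠ i in l, 0 < s i)
    (hD : Tendsto (fun i => x i ^ 2 + α * x i + β * Real.log (x i) - s i ^ 2) l (𝓝 D)) :
    Tendsto (fun i => s i ^ 3 * ((x i)⁻¹ - ((s i)⁻¹ + α / 2 * (s i)⁻¹ ^ 2))
      - β / 2 * Real.log (s i)) l (𝓝 (α ^ 2 / 8 - D / 2)) := by
  have hdiv := tendsto_sq_sub_sq_div_self hx hD
  have hratio := tendsto_div_one_of_sq_sub_sq_div hx hs hdiv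
  have hsub := tendsto_sub_of_sq_sub_sq_div hx hs hdiv
  have hlog : Tendsto (fun i => Real.log (s i / x i)) l (𝓝 0) := by
    simpa using hratio.log one_ne_zero
  -- With `η = s - x`, `s ^ 3 / x - s ^ 2 - α * s / 2 = s / x * η ^ 2 + s * (η - α / 2)`, and
  -- eliminating `s * η` through `s ^ 2 - x ^ 2 = (2 * s - η) * η` leaves only convergent terms.
  have hlim := (((hratio.mul (hsub.pow 2)).sub (hD.div_const 2)).add
    ((hsub.mul (hsub.sub_const α)).div_const 2)).sub (hlog.const_mul (β / 2))
  have hvalue : α ^ 2 / 8 - D / 2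
      = 1 * (α / 2) ^ 2 - D / 2 + α / 2 * (α / 2 - α) / 2 - β / 2 * 0 := by ring
  rw [hvalue]
  refine hlim.congr' ?_
  filter_upwards [hs, hx.eventually_gt_atTop 0] with i hsi hxi
  rw [Real.log_div hsi.ne' hxi.ne']
  field_simp
  ring

lemma rpow_mul_sub_expansion_eq {t : ℝ} (ht : 0 < t) (α β v : ℝ) :
    t ^ ((3 : ℝ) / 2) * (v - (1 / (√2 * t ^ ((1 : ℝ) / 2)) + α / (4 * t)
        + β / (8 * √2) * Real.log t / t ^ ((3 : ℝ) / 2)))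
      = 1 / (2 * √2) * (√(2 * t) ^ 3 * (v - ((√(2 * t))⁻¹ + α / 2 * (√(2 * t))⁻¹ ^ 2))
        - β / 2 * Real.log √(2 * t) + β / 4 * Real.log 2) := by
  have hpow : t ^ ((3 : ℝ) / 2) = √t ^ 3 := by
    rw [Real.sqrt_eq_rpow, ← Real.rpow_mul_natCast ht.le]
    norm_num
  have hlog : Real.log √(2 * t) = Real.log 2 / 2 + Real.log t / 2 := by
    rw [Real.log_sqrt (by positivity), Real.log_mul two_ne_zero ht.ne']
    ring
  have hcube : √(2 * t) ^ 3 = 2 * √2 * √t ^ 3 := by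
    rw [Real.sqrt_mul zero_le_two, mul_pow, pow_succ √2, Real.sq_sqrt zero_le_two]
  have hinv_sq : (√(2 * t))⁻¹ ^ 2 = (2 * √t ^ 2)⁻¹ := by
    rw [inv_pow, Real.sq_sqrt (by positivity), Real.sq_sqrt ht.le]
  have ht_sq : t = √t ^ 2 := (Real.sq_sqrt ht.le).symm
  rw [hlog, hcube, hinv_sq, hpow, ← Real.sqrt_eq_rpow, Real.sqrt_mul zero_le_two]
  generalize Real.log t = logt
  nth_rw 3 [ht_sq]
  field_simp
  ring

theorem exists_tendsto_rpow_mul_inv_sub_expansion {x : ℕ → ℝ} (hx : Tendsto x atTop atTop)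
    (hD : Tendsto (fun k : ℕ => x k ^ 2 + α * x k + β * Real.log (x k) - 2 * k) atTop (𝓝 D)) :
    ∃ C, Tendsto (fun k : ℕ => (k : ℝ) ^ ((3 : ℝ) / 2) *
        ((x k)⁻¹ - (1 / (√2 * (k : ℝ) ^ ((1 : ℝ) / 2)) + α / (4 * (k : ℝ))
          + β / (8 * √2) * Real.log k / (k : ℝ) ^ ((3 : ℝ) / 2)))) atTop (𝓝 C) := by
  have hs : ∀ᶠ k : ℕ in atTop, 0 < √(2 * (k : ℝ)) := by
    filter_upwards [eventually_gt_atTop 0] with k hk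
    positivity
  have hsq (k : ℕ) : √(2 * (k : ℝ)) ^ 2 = 2 * k := Real.sq_sqrt (by positivity)
  have hlim := tendsto_inv_expansion_of_tendsto_sq_expansion hx hs (by simpa only [hsq] using hD)
  refine ⟨_, ((hlim.add_const (β / 4 * Real.log 2)).const_mul (1 / (2 * √2))).congr' ?_⟩
  filter_upwards [eventually_gt_atTop 0] with k hk
  exact (rpow_mul_sub_expansion_eq (Nat.cast_pos.2 hk) α β (x k)⁻¹).symm

end Inversion

section Recurrence

lemma tendsto_zero_of_succ_lt {f : ℝ → ℝ} {y : ℕ → ℝ} (hf_cont : ∀ t, 0 < t → ContinuousAt f t)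
    (hf_lt : ∀ t, 0 < t → f t < t) (hpos : ∀ k, 0 < y k) (hrec : ∀ k, y (k + 1) = f (y k)) :
    Tendsto y atTop (𝓝 0) := by
  have hanti : Antitone y := antitone_nat_of_succ_le fun k => hrec k ▸ (hf_lt _ (hpos k)).le
  have hbdd : BddBelow (Set.range y) := ⟨0, Set.forall_mem_range.2 fun k => (hpos k).le⟩
  have hlim := tendsto_atTop_ciInf hanti hbdd
  obtain hinf | hinf := (le_ciInf fun k => (hpos k).le : 0 ≤ ⨅ k, y k).eq_or_lt
  · rwa [← hinf] at hlim
  · have hfixed : f (⨅ k, y k) = ⨅ k, y k := by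
      refine tendsto_nhds_unique ((hf_cont _ hinf).tendsto.comp hlim) ?_
      exact ((tendsto_add_atTop_iff_nat 1).2 hlim).congr hrec
    exact absurd hfixed (hf_lt _ hinf).ne

variable {y : ℕ → ℝ}

lemma pos_of_log_recurrence (h0 : 0 < y 0)
    (hrec : ∀ k, y (k + 1) = y k / (1 + y k * Real.log (1 + y k))) (k : ℕ) : 0 < y k := by
  induction k with
  | zero => exact h0
  | succ k ih =>
    have hlog : 0 < Real.log (1 + y k) := Real.log_pos (by linarith)
    rw [hrec]
    positivity

lemma tendsto_zero_of_log_recurrence (h0 : 0 < y 0)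
    (hrec : ∀ k, y (k + 1) = y k / (1 + y k * Real.log (1 + y k))) :
    Tendsto y atTop (𝓝 0) := by
  have hlog (t : ℝ) (ht : 0 < t) : 0 < Real.log (1 + t) := Real.log_pos (by linarith)
  refine tendsto_zero_of_succ_lt (f := fun t => t / (1 + t * Real.log (1 + t))) (fun t ht => ?_)
    (fun t ht => ?_) (pos_of_log_recurrence h0 hrec) hrec
  · have hden : 1 + t * Real.log (1 + t) ≠ 0 := by have := hlog t ht; positivity
    have harg : 1 + t ≠ 0 := by positivity
    fun_prop (disch := assumption)
  · exact div_lt_self ht (lt_add_of_pos_right 1 (mul_pos ht (hlog t ht)))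

lemma isBigO_inv_succ_sub_of_log_recurrence (h0 : 0 < y 0)
    (hrec : ∀ k, y (k + 1) = y k / (1 + y k * Real.log (1 + y k))) :
    (fun k => (y (k + 1))⁻¹ - (y k)⁻¹ - (y k + -1 / 2 * y k ^ 2 + 1 / 3 * y k ^ 3)) =O[atTop]
      fun k => y k ^ 4 := by
  have htaylor :=
    isBigO_log_one_add_sub_cubic.comp_tendsto (tendsto_zero_of_log_recurrence h0 hrec)
  refine htaylor.congr_left fun k => ?_
  have hk := pos_of_log_recurrence h0 hrec k
  have hinv : (y (k + 1))⁻¹ = (y k)⁻¹ + Real.log (1 + y k) := by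
    rw [hrec]
    field_simp
  rw [hinv, add_sub_cancel_left, Function.comp_apply]

end Recurrence

theorem stmt_9_general (y : ℕ → ℝ) (h0 : 0 < y 0)
    (hrec : ∀ k, y (k + 1) = y k / (1 + y k * Real.log (1 + y k))) :
    ∃ C : ℝ, Tendsto (fun k : ℕ => (k : ℝ)^((3:ℝ)/2) *
        (y k - (1 / (Real.sqrt 2 * (k : ℝ)^((1:ℝ)/2)) + 1 / (4 * (k : ℝ)) -
          (7 / (48 * Real.sqrt 2)) * Real.log k / (k : ℝ)^((3:ℝ)/2))))
      atTop (𝓝 C) := by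
  have hpos := pos_of_log_recurrence h0 hrec
  have hinv_top : Tendsto (fun k => (y k)⁻¹) atTop atTop :=
    (tendsto_nhdsWithin_iff.2
      ⟨tendsto_zero_of_log_recurrence h0 hrec, .of_forall hpos⟩).inv_tendsto_nhdsGT_zero
  obtain ⟨D, hD⟩ := exists_tendsto_correctedSq_sub_two_mul (a := -1 / 2) (b := 1 / 3) hinv_top
    (by simpa only [inv_inv] using isBigO_inv_succ_sub_of_log_recurrence h0 hrec)
  obtain ⟨C, hC⟩ := exists_tendsto_rpow_mul_inv_sub_expansion (α := 1) (β := -7 / 6) hinv_top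
    (hD.congr fun k => by rw [correctedSq]; ring)
  refine ⟨C, hC.congr fun k => ?_⟩
  rw [inv_inv]
  ring

theorem stmt_9 (y : ℕ → ℝ) (h0 : y 0 = 1)
    (hrec : ∀ k, y (k + 1) = y k / (1 + y k * Real.log (1 + y k))) :
    ∃ C : ℝ, Tendsto (fun k : ℕ => (k : ℝ)^((3:ℝ)/2) *
        (y k - (1 / (Real.sqrt 2 * (k : ℝ)^((1:ℝ)/2)) + 1 / (4 * (k : ℝ)) -
          (7 / (48 * Real.sqrt 2)) * Real.log k / (k : ℝ)^((3:ℝ)/2))))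
      atTop (𝓝 C) :=
  stmt_9_general y (h0 ▸ one_pos) hrec
end

section
/- Let x : ℕ → ℝ be defined by x₀ = 1 and x_k = x_{k-1} + ln(1 + 1/x_{k-1}) for k ≥ 1. Then lim_{k→∞} (x_k - √(2k)) = -1/2. -/
open Filter Topology

/-!
The forward difference `δ = x (k + 1) - x k` satisfies `1 / δ = x k + 1/2 + o(1)`, because
`1 / log (1 + 1 / t) = t + 1/2 + o(1)` as `t → ∞`. With `c = 1/2`, the sequence `(x k + c) ^ 2`
then has forward difference `δ * (2 * (x k + c) + δ) = 2 + o(δ)`. By Stolz–Cesàro against `x`,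
`(x k + c) ^ 2 - 2 * k = o(x k)`, and dividing by `x k + c + √(2 * k)` gives
`x k + c - √(2 * k) → 0`.
-/

open Asymptotics Set

theorem isLittleO_of_forwardDiff_isLittleO {E : Type*} [NormedAddCommGroup E] {u : ℕ → E}
    {v : ℕ → ℝ} (hmono : Monotone v) (hv : Tendsto v atTop atTop)
    (h : (fun k ↦ u (k + 1) - u k) =o[atTop] fun k ↦ v (k + 1) - v k) : u =o[atTop] v := by
  have hnorm : Tendsto (norm ∘ v) atTop atTop := tendsto_norm_atTop_atTop.comp hv
  have hsum : (fun k ↦ u k - u 0) =o[atTop] fun k ↦ v k - v 0 := by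
    simpa only [Finset.sum_range_sub] using
      h.sum_range (fun k ↦ sub_nonneg.2 (hmono k.le_succ))
        (by simpa only [Finset.sum_range_sub, sub_eq_add_neg (v _) (v 0)] using
          tendsto_atTop_add_const_right _ (-v 0) hv)
  have hdiff : (fun k ↦ v k - v 0) =O[atTop] v :=
    (isBigO_refl v atTop).sub (isLittleO_const_left.2 (.inr hnorm)).isBigO
  simpa only [sub_add_cancel] using
    (hsum.trans_isBigO hdiff).add (isLittleO_const_left (c := u 0).2 (.inr hnorm))

theorem tendsto_sub_zero_of_sq_sub_sq_isLittleO {α : Type*} {l : Filter α} {a b : α → ℝ}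
    (ha : ∀ᶠ i in l, 0 < a i) (hb : ∀ᶠ i in l, 0 ≤ b i)
    (h : (fun i ↦ a i ^ 2 - b i ^ 2) =o[l] a) : Tendsto (fun i ↦ a i - b i) l (𝓝 0) := by
  refine squeeze_zero_norm' ?_ h.norm_norm.tendsto_div_nhds_zero
  filter_upwards [ha, hb] with i hai hbi
  rw [le_div_iff₀ (norm_pos_iff.2 hai.ne'), ← norm_mul, sq_sub_sq, norm_mul, norm_mul, mul_comm]
  gcongr
  rw [Real.norm_of_nonneg hai.le, Real.norm_of_nonneg (by positivity)]
  exact le_add_of_nonneg_right hbi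

section ForwardDiff

variable {x : ℕ → ℝ} {c : ℝ}

theorem sq_forwardDiff_sub_two_isLittleO (hx : Tendsto x atTop atTop)
    (hdiff : Tendsto (fun k ↦ (x (k + 1) - x k)⁻¹ - x k) atTop (𝓝 c)) :
    (fun k ↦ (x (k + 1) + c) ^ 2 - (x k + c) ^ 2 - 2) =o[atTop] fun k ↦ x (k + 1) - x k := by
  have hinv : Tendsto (fun k ↦ (x (k + 1) - x k)⁻¹) atTop atTop := by
    simpa only [sub_add_cancel] using hdiff.add_atTop hx
  have hzero : Tendsto (fun k ↦ x (k + 1) - x k) atTop (𝓝 0) := by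
    simpa only [Function.comp_def, inv_inv] using tendsto_inv_atTop_zero.comp hinv
  have hfactor : Tendsto
      (fun k ↦ 2 * (c - ((x (k + 1) - x k)⁻¹ - x k)) + (x (k + 1) - x k)) atTop (𝓝 0) := by
    simpa only [sub_self, mul_zero, add_zero] using
      ((hdiff.const_sub c).const_mul 2).add hzero
  refine ((isBigO_refl (fun k ↦ x (k + 1) - x k) atTop).mul_isLittleO
    ((isLittleO_one_iff ℝ).2 hfactor)).congr' ?_ (.of_forall fun k ↦ mul_one _)
  filter_upwards [hinv.eventually_gt_atTop 0] with k hk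
  have hne : x (k + 1) - x k ≠ 0 := (inv_pos.1 hk).ne'
  field_simp
  ring

theorem tendsto_sub_sqrt_two_mul (hmono : Monotone x) (hx : Tendsto x atTop atTop)
    (hdiff : Tendsto (fun k ↦ (x (k + 1) - x k)⁻¹ - x k) atTop (𝓝 c)) :
    Tendsto (fun k : ℕ ↦ x k - √(2 * k)) atTop (𝓝 (-c)) := by
  have hxc : Tendsto (fun k ↦ x k + c) atTop atTop := tendsto_atTop_add_const_right _ c hx
  have hsq : (fun k : ℕ ↦ (x k + c) ^ 2 - √(2 * k) ^ 2) =o[atTop] fun k ↦ x k + c := by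
    refine isLittleO_of_forwardDiff_isLittleO (hmono.add_const c) hxc
      ((sq_forwardDiff_sub_two_isLittleO hx hdiff).congr (fun k ↦ ?_) fun k ↦ ?_)
    · rw [Real.sq_sqrt (by positivity), Real.sq_sqrt (by positivity)]
      push_cast
      ring
    · ring
  have hlim : Tendsto (fun k : ℕ ↦ x k + c - √(2 * k)) atTop (𝓝 0) :=
    tendsto_sub_zero_of_sq_sub_sq_isLittleO (hxc.eventually_gt_atTop 0)
      (.of_forall fun k ↦ Real.sqrt_nonneg _) hsq
  exact (zero_sub c ▸ hlim.sub_const c).congr fun k ↦ by ring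

end ForwardDiff

section Recurrence

variable {φ : ℝ → ℝ} {x : ℕ → ℝ}

theorem strictMono_of_succ_eq_add (hpos : ∀ t, x 0 ≤ t → 0 < φ t)
    (hrec : ∀ k, x (k + 1) = x k + φ (x k)) : StrictMono x := by
  have hge (k : ℕ) : x 0 ≤ x k := by
    induction k with
    | zero => exact le_rfl
    | succ k ih => exact hrec k ▸ le_add_of_le_of_nonneg ih (hpos _ ih).le
  exact strictMono_nat_of_lt_succ fun k ↦ hrec k ▸ lt_add_of_pos_right _ (hpos _ (hge k))

theorem tendsto_atTop_of_succ_eq_add (hcont : ContinuousOn φ (Ici (x 0)))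
    (hpos : ∀ t, x 0 ≤ t → 0 < φ t) (hrec : ∀ k, x (k + 1) = x k + φ (x k)) :
    Tendsto x atTop atTop := by
  have hmono : Monotone x := (strictMono_of_succ_eq_add hpos hrec).monotone
  refine (tendsto_atTop_of_monotone hmono).resolve_right fun ⟨l, hl⟩ ↦ ?_
  have hle : x 0 ≤ l := hmono.ge_of_tendsto hl 0
  have hφ : Tendsto (fun k ↦ φ (x k)) atTop (𝓝 (φ l)) :=
    (hcont l hle).tendsto.comp
      (tendsto_nhdsWithin_iff.2 ⟨hl, .of_forall fun k ↦ hmono k.zero_le⟩)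
  have hfix : l = l + φ l :=
    tendsto_nhds_unique (hl.comp (tendsto_add_atTop_nat 1))
      ((hl.add hφ).congr fun k ↦ (hrec k).symm)
  exact (hpos l hle).ne' (left_eq_add.1 hfix)

end Recurrence

section Log

variable {t : ℝ}

theorem log_one_add_inv_pos (ht : 0 < t) : 0 < Real.log (1 + t⁻¹) :=
  Real.log_pos (lt_add_of_pos_right 1 (inv_pos.2 ht))

theorem continuousOn_log_one_add_inv : ContinuousOn (fun t : ℝ ↦ Real.log (1 + t⁻¹)) (Ioi 0) :=
  (continuousOn_const.add (continuousOn_inv₀.mono fun _ ht ↦ ne_of_gt ht)).log fun _ ht ↦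
    (add_pos one_pos (inv_pos.2 (mem_Ioi.1 ht))).ne'

theorem inv_log_one_add_inv_le (ht : 0 < t) : (Real.log (1 + t⁻¹))⁻¹ ≤ t + 1 / 2 := by
  refine inv_le_of_inv_le₀ (by positivity) ?_
  calc (t + 1 / 2)⁻¹ = 2 * t⁻¹ / (t⁻¹ + 2) := by field_simp; ring
    _ ≤ Real.log (1 + t⁻¹) := Real.le_log_one_add_of_nonneg (by positivity)

theorem le_inv_log_one_add_inv (ht : 0 < t) :
    t + 1 / 2 - (4 * t + 2)⁻¹ ≤ (Real.log (1 + t⁻¹))⁻¹ := by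
  have hpos := log_one_add_inv_pos ht
  have hle : Real.log (1 + t⁻¹) ≤ (t + 1 / 2) / (t * (t + 1)) :=
    calc Real.log (1 + t⁻¹) ≤ Real.sinh (Real.log (1 + t⁻¹)) := Real.self_le_sinh_iff.2 hpos.le
      _ = (t + 1 / 2) / (t * (t + 1)) := by
        rw [Real.sinh_log (by positivity)]
        field_simp
        ring
  calc t + 1 / 2 - (4 * t + 2)⁻¹ = ((t + 1 / 2) / (t * (t + 1)))⁻¹ := by field_simp; ring
    _ ≤ (Real.log (1 + t⁻¹))⁻¹ := inv_anti₀ hpos hle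

theorem tendsto_inv_log_one_add_inv_sub_self :
    Tendsto (fun t : ℝ ↦ (Real.log (1 + t⁻¹))⁻¹ - t) atTop (𝓝 (1 / 2)) := by
  have herror : Tendsto (fun t : ℝ ↦ 1 / 2 - (4 * t + 2)⁻¹) atTop (𝓝 (1 / 2)) := by
    have hlin : Tendsto (fun t : ℝ ↦ 4 * t + 2) atTop atTop :=
      tendsto_atTop_add_const_right _ 2 (tendsto_id.const_mul_atTop four_pos)
    simpa only [sub_zero, Pi.inv_apply] using hlin.inv_tendsto_atTop.const_sub (1 / 2)
  refine tendsto_of_tendsto_of_tendsto_of_le_of_le' herror tendsto_const_nhds ?_ ?_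
  · filter_upwards [eventually_gt_atTop 0] with t ht
    linarith [le_inv_log_one_add_inv ht]
  · filter_upwards [eventually_gt_atTop 0] with t ht
    linarith [inv_log_one_add_inv_le ht]

end Log

theorem stmt_10_general (x : ℕ → ℝ) (h0 : 0 < x 0)
    (hrec : ∀ k, x (k + 1) = x k + Real.log (1 + 1 / x k)) :
    Tendsto (fun k : ℕ => x k - Real.sqrt (2 * k)) atTop (𝓝 (-1/2)) := by
  simp only [one_div] at hrec
  have hpos (t : ℝ) (ht : x 0 ≤ t) : 0 < Real.log (1 + t⁻¹) := log_one_add_inv_pos (h0.trans_le ht)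
  have hmono : StrictMono x := strictMono_of_succ_eq_add hpos hrec
  have hx : Tendsto x atTop atTop :=
    tendsto_atTop_of_succ_eq_add
      (continuousOn_log_one_add_inv.mono (Ici_subset_Ioi.2 h0)) hpos hrec
  have hdiff : Tendsto (fun k ↦ (x (k + 1) - x k)⁻¹ - x k) atTop (𝓝 (1 / 2)) := by
    simpa only [hrec, add_sub_cancel_left, Function.comp_def] using
      tendsto_inv_log_one_add_inv_sub_self.comp hx
  simpa only [neg_div] using tendsto_sub_sqrt_two_mul hmono.monotone hx hdiff

theorem stmt_10 (x : ℕ → ℝ) (h0 : x 0 = 1)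
    (hrec : ∀ k, x (k + 1) = x k + Real.log (1 + 1 / x k)) :
    Tendsto (fun k : ℕ => x k - Real.sqrt (2 * k)) atTop (𝓝 (-1/2)) :=
  stmt_10_general x (h0 ▸ one_pos) hrec
end

section
/- Let θ be the unique real number with cos θ = θ. Let x : ℕ → ℝ be defined by x₀ = 0 and x_k = cos(x_{k-1}) for k ≥ 1, and set u_k = x_{2k+1} - θ. Then for every k ≥ 0, u_{k+1} < (1 - θ²/2)·u_k, and consequently u_k < (1 - θ²/2)^k · u₀ for all k ≥ 1. -/
/-!
On `(θ, π / 2]` the map `cos` lands in `[0, θ)`, and a second application returns above `θ`.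
Since `sin t < t` for `0 < t`, the identity
`cos a - cos b = 2 * sin ((b - a) / 2) * sin ((a + b) / 2)` shows that each application scales the
distance to `θ` by less than the sine of the midpoint. In the second application this midpoint lies
below `θ`, so two steps contract by less than
`sin t * sin θ ≤ (1 + sin θ ^ 2) / 2 = 1 - θ ^ 2 / 2`, where `t` is the first midpoint.
-/

open Real

lemma cos_sub_cos_lt_mul_sin_midpoint {a b : ℝ} (hab : a < b) (hsin : 0 < sin ((a + b) / 2)) :
    cos a - cos b < (b - a) * sin ((a + b) / 2) := by
  have sin_half_lt : sin ((b - a) / 2) < (b - a) / 2 := sin_lt (by linarith)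
  calc cos a - cos b
      = 2 * sin ((b - a) / 2) * sin ((a + b) / 2) := by
        rw [cos_sub_cos, ← neg_sub b a, neg_div, sin_neg]; ring
    _ < 2 * ((b - a) / 2) * sin ((a + b) / 2) := by gcongr
    _ = (b - a) * sin ((a + b) / 2) := by ring

lemma cos_sub_cos_lt_mul_sin_right {a b : ℝ} (ha : 0 ≤ a) (hab : a < b) (hb : b ≤ π / 2) :
    cos a - cos b < (b - a) * sin b := by
  have sin_midpoint_pos : 0 < sin ((a + b) / 2) :=
    sin_pos_of_pos_of_lt_pi (by linarith) (by linarith)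
  have sin_midpoint_le : sin ((a + b) / 2) ≤ sin b :=
    sin_le_sin_of_le_of_le_pi_div_two (by linarith) hb (by linarith)
  exact (cos_sub_cos_lt_mul_sin_midpoint hab sin_midpoint_pos).trans_le
    (mul_le_mul_of_nonneg_left sin_midpoint_le (sub_nonneg.2 hab.le))

lemma sin_mul_sin_le_one_sub_cos_sq_div_two (a b : ℝ) : sin a * sin b ≤ 1 - cos b ^ 2 / 2 := by
  linarith [two_mul_le_add_sq (sin a) (sin b), sin_sq_le_one a, sin_sq_add_cos_sq b]

section CosFixedPoint

variable {θ y : ℝ}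

lemma pos_of_cos_eq_self (hθ : cos θ = θ) : 0 < θ := by
  have neg_one_le : -1 ≤ θ := hθ ▸ neg_one_le_cos θ
  have le_one : θ ≤ 1 := hθ ▸ cos_le_one θ
  exact hθ ▸ cos_pos_of_mem_Ioo ⟨by linarith [pi_gt_three], by linarith [pi_gt_three]⟩

lemma lt_one_of_cos_eq_self (hθ : cos θ = θ) : θ < 1 := by
  have le_one : θ ≤ 1 := hθ ▸ cos_le_one θ
  have cos_lt : cos θ < cos 0 :=
    cos_lt_cos_of_nonneg_of_le_pi_div_two le_rfl (le_one.trans one_le_pi_div_two)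
      (pos_of_cos_eq_self hθ)
  rwa [hθ, cos_zero] at cos_lt

lemma cos_lt_of_cos_eq_self (hθ : cos θ = θ) (hy : θ < y) (hyπ : y ≤ π) : cos y < θ :=
  (cos_lt_cos_of_nonneg_of_le_pi (pos_of_cos_eq_self hθ).le hyπ hy).trans_eq hθ

lemma lt_cos_of_cos_eq_self (hθ : cos θ = θ) (hy₀ : 0 ≤ y) (hy : y < θ) : θ < cos y :=
  hθ.symm.trans_lt <| cos_lt_cos_of_nonneg_of_le_pi hy₀
    (by linarith [lt_one_of_cos_eq_self hθ, pi_gt_three]) hy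

lemma lt_cos_cos_of_cos_eq_self (hθ : cos θ = θ) (hy : θ < y) (hyπ : y ≤ π / 2) :
    θ < cos (cos y) := by
  have θ_pos := pos_of_cos_eq_self hθ
  exact lt_cos_of_cos_eq_self hθ (cos_nonneg_of_neg_pi_div_two_le_of_le (by linarith) hyπ)
    (cos_lt_of_cos_eq_self hθ hy (by linarith))

lemma cos_cos_sub_lt_of_cos_eq_self (hθ : cos θ = θ) (hy : θ < y) (hyπ : y ≤ π / 2) :
    cos (cos y) - θ < (1 - θ ^ 2 / 2) * (y - θ) := by
  have θ_pos := pos_of_cos_eq_self hθ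
  have θ_le : θ ≤ π / 2 := hy.le.trans hyπ
  have cos_nonneg : 0 ≤ cos y := cos_nonneg_of_neg_pi_div_two_le_of_le (by linarith) hyπ
  have cos_lt : cos y < θ := cos_lt_of_cos_eq_self hθ hy (by linarith)
  have sin_θ_pos : 0 < sin θ := sin_pos_of_pos_of_lt_pi θ_pos (by linarith)
  have first_step : θ - cos y < (y - θ) * sin ((θ + y) / 2) := by
    simpa only [hθ] using cos_sub_cos_lt_mul_sin_midpoint hy
      (sin_pos_of_pos_of_lt_pi (by linarith) (by linarith))
  have second_step : cos (cos y) - θ < (θ - cos y) * sin θ := by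
    simpa only [hθ] using cos_sub_cos_lt_mul_sin_right cos_nonneg cos_lt θ_le
  have factor_le : sin ((θ + y) / 2) * sin θ ≤ 1 - θ ^ 2 / 2 := by
    simpa only [hθ] using sin_mul_sin_le_one_sub_cos_sq_div_two ((θ + y) / 2) θ
  calc cos (cos y) - θ
      < (θ - cos y) * sin θ := second_step
    _ < (y - θ) * sin ((θ + y) / 2) * sin θ := by gcongr
    _ = sin ((θ + y) / 2) * sin θ * (y - θ) := by ring
    _ ≤ (1 - θ ^ 2 / 2) * (y - θ) := mul_le_mul_of_nonneg_right factor_le (sub_pos.2 hy).le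

end CosFixedPoint

section CosOrbit

variable {x : ℕ → ℝ}

lemma cos_orbit_succ_le_pi_div_two (hrec : ∀ k, x (k + 1) = cos (x k)) (k : ℕ) :
    x (k + 1) ≤ π / 2 :=
  hrec k ▸ (cos_le_one _).trans one_le_pi_div_two

lemma cos_orbit_add_two (hrec : ∀ k, x (k + 1) = cos (x k)) (k : ℕ) :
    x (k + 2) = cos (cos (x k)) := by
  rw [hrec (k + 1), hrec k]

lemma lt_cos_orbit_odd {θ : ℝ} (hθ : cos θ = θ) (hx₀ : θ < cos (x 0))
    (hrec : ∀ k, x (k + 1) = cos (x k)) (k : ℕ) : θ < x (2 * k + 1) := by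
  induction k with
  | zero => exact hx₀.trans_eq (hrec 0).symm
  | succ k ih =>
    exact (lt_cos_cos_of_cos_eq_self hθ ih (cos_orbit_succ_le_pi_div_two hrec _)).trans_eq
      (cos_orbit_add_two hrec (2 * k + 1)).symm

end CosOrbit

theorem stmt_13_general {θ : ℝ} (hθ : cos θ = θ) {x : ℕ → ℝ} (hx₀ : θ < cos (x 0))
    (hrec : ∀ k, x (k + 1) = cos (x k)) {u : ℕ → ℝ} (hu : ∀ k, u k = x (2 * k + 1) - θ) :
    (∀ k, u (k + 1) < (1 - θ ^ 2 / 2) * u k) ∧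
    ∀ k ≥ 1, u k < (1 - θ ^ 2 / 2) ^ k * u 0 := by
  have contraction : ∀ k, u (k + 1) < (1 - θ ^ 2 / 2) * u k := fun k => by
    rw [hu, hu, show 2 * (k + 1) + 1 = 2 * k + 1 + 2 by ring, cos_orbit_add_two hrec]
    exact cos_cos_sub_lt_of_cos_eq_self hθ (lt_cos_orbit_odd hθ hx₀ hrec k)
      (cos_orbit_succ_le_pi_div_two hrec _)
  have factor_nonneg : 0 ≤ 1 - θ ^ 2 / 2 := by linarith [hθ ▸ cos_sq_le_one θ]
  exact ⟨contraction, fun k hk => lt_geom factor_nonneg hk fun i _ => contraction i⟩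

theorem stmt_13 (θ : ℝ) (hθ : Real.cos θ = θ)
    (x : ℕ → ℝ) (h0 : x 0 = 0)
    (hrec : ∀ k, x (k + 1) = Real.cos (x k))
    (u : ℕ → ℝ) (hu : ∀ k, u k = x (2*k+1) - θ) :
    (∀ k, u (k + 1) < (1 - θ^2/2) * u k) ∧
    ∀ k ≥ 1, u k < (1 - θ^2/2)^k * u 0 :=
  stmt_13_general hθ (by simpa only [h0, cos_zero] using lt_one_of_cos_eq_self hθ) hrec hu
end

section
/- Let θ be the unique real number with cos θ = θ. Let x : ℕ → ℝ be defined by x₀ = 0 and x_k = cos(x_{k-1}) for k ≥ 1. Then lim_{k→∞} (x_{2k+1} - θ)/(θ - x_{2k}) = √(1 - θ²); that is, the limit of (x_{2k+1} - θ)/(1 - θ²)^k equals √(1 - θ²) times the limit of (θ - x_{2k})/(1 - θ²)^k. -/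
open Filter Topology

/-!
Cosine contracts `[-1, 1]` by the factor `sin 1 < 1`, and maps `ℝ` into `[-1, 1]`, so its iterates
converge to `θ` from every starting point. Along an orbit converging to a fixed point without
reaching it, the ratio of consecutive errors is a difference quotient, so it tends to the
derivative there, `-sin θ = -√(1 - θ²)`.
-/

section Iterate

open Function Set

lemma eq_iterate_of_succ_s15 {α : Type*} {f : α → α} {x : ℕ → α} (hrec : ∀ k, x (k + 1) = f (x k))
    (k : ℕ) : x k = f^[k] (x 0) := by
  induction k with
  | zero => rfl
  | succ k ih => rw [hrec, ih, iterate_succ_apply']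

lemma iterate_ne_of_injOn {α : Type*} {f : α → α} {s : Set α} {p a : α} (hinj : InjOn f s)
    (hmaps : MapsTo f s s) (hp : IsFixedPt f p) (hps : p ∈ s) (has : a ∈ s) (hap : a ≠ p) (n : ℕ) :
    f^[n] a ≠ p :=
  fun h ↦ hap <| hinj.iterate hmaps n has hps <| h.trans (hp.iterate n).symm

lemma tendsto_iterate_of_lipschitzOnWith {α : Type*} [PseudoMetricSpace α] {f : α → α} {s : Set α}
    {K : NNReal} {p a : α} (hf : LipschitzOnWith K f s) (hK : K < 1) (hmaps : MapsTo f s s)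
    (hp : IsFixedPt f p) (hps : p ∈ s) (has : a ∈ s) :
    Tendsto (fun n ↦ f^[n] a) atTop (𝓝 p) := by
  have hdist (n : ℕ) : dist (f^[n] a) p ≤ K ^ n * dist a p := by
    induction n with
    | zero => simp
    | succ n ih =>
      calc dist (f^[n + 1] a) p = dist (f (f^[n] a)) (f p) := by rw [iterate_succ_apply', hp]
        _ ≤ K * dist (f^[n] a) p := hf.dist_le_mul _ (hmaps.iterate n has) _ hps
        _ ≤ K * (K ^ n * dist a p) := by gcongr
        _ = K ^ (n + 1) * dist a p := by ring
  have hpow : Tendsto (fun n : ℕ ↦ (K : ℝ) ^ n * dist a p) atTop (𝓝 0) := by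
    simpa using (tendsto_pow_atTop_nhds_zero_of_lt_one K.coe_nonneg hK).mul_const (dist a p)
  exact tendsto_iff_dist_tendsto_zero.2 (squeeze_zero (fun _ ↦ dist_nonneg) hdist hpow)

lemma tendsto_iterate_succ_sub_div_sub {𝕜 : Type*} [NontriviallyNormedField 𝕜] {f : 𝕜 → 𝕜}
    {f' p a : 𝕜} (hf : HasDerivAt f f' p) (hp : IsFixedPt f p)
    (hlim : Tendsto (fun n ↦ f^[n] a) atTop (𝓝 p)) (hne : ∀ n, f^[n] a ≠ p) :
    Tendsto (fun n ↦ (f^[n + 1] a - p) / (f^[n] a - p)) atTop (𝓝 f') := by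
  have hlim' : Tendsto (fun n ↦ f^[n] a) atTop (𝓝[≠] p) :=
    tendsto_nhdsWithin_iff.2 ⟨hlim, .of_forall hne⟩
  refine (hf.tendsto_slope.comp hlim').congr fun n ↦ ?_
  rw [comp_apply, slope_def_field, iterate_succ_apply', hp]

end Iterate

section Cos

open Function Real Set

lemma lipschitzOnWith_cos_Icc {r : ℝ} (hr : r ≤ π / 2) :
    LipschitzOnWith (sin r).toNNReal cos (Icc (-r) r) := by
  refine (convex_Icc (-r) r).lipschitzOnWith_of_nnnorm_deriv_le
    (fun y _ ↦ differentiableAt_cos) fun y hy ↦ NNReal.le_toNNReal_of_coe_le ?_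
  rw [Real.deriv_cos, coe_nnnorm, norm_neg, norm_eq_abs, abs_le, ← sin_neg]
  exact ⟨sin_le_sin_of_le_of_le_pi_div_two (by linarith) (hy.2.trans hr) hy.1,
    sin_le_sin_of_le_of_le_pi_div_two (by linarith [hy.1]) hr hy.2⟩

variable {θ : ℝ}

lemma mem_Ioc_of_isFixedPt_cos (hθ : IsFixedPt cos θ) : θ ∈ Ioc 0 1 := by
  have hle : θ ≤ 1 := hθ ▸ cos_le_one θ
  have hge : -1 ≤ θ := hθ ▸ neg_one_le_cos θ
  have hpos : 0 < cos θ := cos_pos_of_mem_Ioo ⟨by linarith [pi_gt_three], by linarith [pi_gt_three]⟩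
  exact ⟨hθ ▸ hpos, hle⟩

lemma sin_eq_sqrt_of_isFixedPt_cos (hθ : IsFixedPt cos θ) : sin θ = √(1 - θ ^ 2) := by
  obtain ⟨hpos, hle⟩ := mem_Ioc_of_isFixedPt_cos hθ
  rw [sin_eq_sqrt_one_sub_cos_sq hpos.le (by linarith [pi_gt_three]), hθ]

lemma tendsto_iterate_cos (hθ : IsFixedPt cos θ) (a : ℝ) :
    Tendsto (fun n ↦ cos^[n] a) atTop (𝓝 θ) := by
  have hcontr : (sin 1).toNNReal < 1 := Real.toNNReal_lt_one.2 (sin_lt one_pos)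
  have hlim : Tendsto (fun n ↦ cos^[n] (cos a)) atTop (𝓝 θ) :=
    tendsto_iterate_of_lipschitzOnWith (lipschitzOnWith_cos_Icc one_le_pi_div_two) hcontr
      (fun y _ ↦ cos_mem_Icc y) hθ (hθ ▸ cos_mem_Icc θ) (cos_mem_Icc a)
  exact (tendsto_add_atTop_iff_nat 1).1 hlim

lemma iterate_cos_ne {a : ℝ} (hθ : IsFixedPt cos θ) (ha : a ∈ Icc 0 (π / 2)) (haθ : a ≠ θ)
    (n : ℕ) : cos^[n] a ≠ θ := by
  have hinj : InjOn cos (Icc 0 (π / 2)) :=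
    injOn_cos.mono (Icc_subset_Icc_right (half_le_self pi_pos.le))
  have hmaps : MapsTo cos (Icc 0 (π / 2)) (Icc 0 (π / 2)) := fun y hy ↦
    ⟨cos_nonneg_of_mem_Icc ⟨by linarith [hy.1, pi_pos], hy.2⟩,
      (cos_le_one y).trans one_le_pi_div_two⟩
  obtain ⟨hpos, hle⟩ := mem_Ioc_of_isFixedPt_cos hθ
  exact iterate_ne_of_injOn hinj hmaps hθ ⟨hpos.le, hle.trans one_le_pi_div_two⟩ ha haθ n

end Cos

theorem stmt_15_general (θ : ℝ) (hθ : Real.cos θ = θ) (x : ℕ → ℝ)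
    (hrec : ∀ k, x (k + 1) = Real.cos (x k)) (hne : ∀ k, x k ≠ θ) :
    Tendsto (fun k : ℕ => (x (k + 1) - θ) / (θ - x k)) atTop (𝓝 (Real.sqrt (1 - θ ^ 2))) := by
  have hx := eq_iterate_of_succ_s15 hrec
  have hratio := tendsto_iterate_succ_sub_div_sub (Real.hasDerivAt_cos θ) hθ
    (tendsto_iterate_cos hθ (x 0)) fun k ↦ hx k ▸ hne k
  rw [← sin_eq_sqrt_of_isFixedPt_cos hθ, ← neg_neg (Real.sin θ)]
  refine hratio.neg.congr fun k ↦ ?_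
  rw [← hx, ← hx, ← div_neg, neg_sub]

theorem stmt_15 (θ : ℝ) (hθ : Real.cos θ = θ)
    (x : ℕ → ℝ) (h0 : x 0 = 0)
    (hrec : ∀ k, x (k + 1) = Real.cos (x k)) :
    Tendsto (fun k : ℕ => (x (2*k+1) - θ) / (θ - x (2*k))) atTop
      (𝓝 (Real.sqrt (1 - θ^2))) := by
  have hne (k : ℕ) : x k ≠ θ := by
    rw [eq_iterate_of_succ_s15 hrec, h0]
    exact iterate_cos_ne hθ ⟨le_rfl, Real.pi_div_two_pos.le⟩ (mem_Ioc_of_isFixedPt_cos hθ).1.ne k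
  exact (stmt_15_general θ hθ x hrec hne).comp (tendsto_id.const_mul_atTop' two_pos)
end

section
/- Let λ be a real number with 1 < λ < 2, set μ = (λ - 1)/λ, and let x : ℕ → ℝ satisfy x_k = λ·x_{k-1}·(1 - x_{k-1}) for k ≥ 1 with initial value x₀ satisfying μ < x₀ < 1 - μ. Then the sequence x_k is strictly decreasing, satisfies μ < x_k for all k, converges to μ, and the limit lim_{k→∞} (x_k - μ)/(2 - λ)^k exists and is a strictly positive real number. -/
open Filter Topology

/-!
The deviations `d k = x k - μ` satisfy `d (k + 1) = r * d k * (1 - c * d k)` with `r = 2 - lam` and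
`c = lam / (2 - lam)`, and `x 0 < 1 - μ` says exactly that `c * d 0 < 1`. Hence `d` stays positive
and is dominated by a geometric sequence of ratio `r < 1`, so it is summable, and therefore
`d k / r ^ k = d 0 * ∏ j < k, (1 - c * d j)` converges to a positive infinite product.
-/

theorem tprod_one_add_pos_of_summable {ι : Type*} {f : ι → ℝ} (hf : Summable f)
    (hpos : ∀ i, 0 < 1 + f i) : 0 < ∏' i, (1 + f i) := by
  rw [← Real.rexp_tsum_eq_tprod hpos (Real.summable_log_one_add_of_summable hf)]
  exact Real.exp_pos _

theorem tendsto_div_pow_of_multipliable {K : Type*} [Field K] [TopologicalSpace K]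
    [ContinuousMul K] {r : K} {d q : ℕ → K} (hr : r ≠ 0) (hd : ∀ k, d (k + 1) = r * d k * q k)
    (hq : Multipliable q) :
    Tendsto (fun k ↦ d k / r ^ k) atTop (𝓝 (d 0 * ∏' k, q k)) := by
  have hprod (n : ℕ) : d n / r ^ n = d 0 * ∏ k ∈ Finset.range n, q k := by
    induction n with
    | zero => simp
    | succ n ih =>
      rw [Finset.prod_range_succ, ← mul_assoc, ← ih, hd, pow_succ]
      field_simp
  simpa only [hprod] using hq.tendsto_prod_tprod_nat.const_mul (d 0)

/-- `d` is an orbit of the quadratic map `t ↦ r * t * (1 - c * t)`, which fixes `0` with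
multiplier `r`. The logistic map is the case `c = 1`; keeping `c` free makes the class of maps
stable under moving the other fixed point to `0`. -/
def IsQuadraticOrbit {R : Type*} [Ring R] (r c : R) (d : ℕ → R) : Prop :=
  ∀ k, d (k + 1) = r * d k * (1 - c * d k)

namespace IsQuadraticOrbit

theorem sub_fixedPoint {K : Type*} [Field K] {r c μ : K} {d : ℕ → K}
    (h : IsQuadraticOrbit r c d) (hμ : r * (c * μ) = r - 1) (hr : 2 - r ≠ 0) :
    IsQuadraticOrbit (2 - r) (r * c / (2 - r)) (fun k ↦ d k - μ) := by
  intro k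
  have hfactor : d (k + 1) - μ = (d k - μ) * ((2 - r) - r * c * (d k - μ)) := by
    rw [h k]
    linear_combination (μ - 2 * d k) * hμ
  simp only [hfactor]
  field_simp

section OrderedRing

variable {R : Type*} [CommRing R] [LinearOrder R] [IsStrictOrderedRing R] {r c : R} {d : ℕ → R}

theorem succ_le_mul (h : IsQuadraticOrbit r c d) (hr : 0 ≤ r) (hc : 0 ≤ c) {k : ℕ}
    (hk : 0 ≤ d k) : d (k + 1) ≤ r * d k := by
  rw [h k]
  exact mul_le_of_le_one_right (mul_nonneg hr hk) (sub_le_self _ (mul_nonneg hc hk))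

theorem pos_and_mul_lt_one (h : IsQuadraticOrbit r c d) (hr0 : 0 < r) (hr1 : r ≤ 1)
    (hc : 0 ≤ c) (hd0 : 0 < d 0) (hcd0 : c * d 0 < 1) (k : ℕ) : 0 < d k ∧ c * d k < 1 := by
  induction k with
  | zero => exact ⟨hd0, hcd0⟩
  | succ k ih =>
    obtain ⟨hpos, hlt⟩ := ih
    constructor
    · rw [h k]
      exact mul_pos (mul_pos hr0 hpos) (sub_pos.2 hlt)
    · calc
        c * d (k + 1) ≤ c * (r * d k) :=
          mul_le_mul_of_nonneg_left (h.succ_le_mul hr0.le hc hpos.le) hc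
        _ ≤ c * d k := mul_le_mul_of_nonneg_left (mul_le_of_le_one_left hpos.le hr1) hc
        _ < 1 := hlt

theorem strictAnti (h : IsQuadraticOrbit r c d) (hr0 : 0 ≤ r) (hr1 : r < 1) (hc : 0 ≤ c)
    (hpos : ∀ k, 0 < d k) : StrictAnti d :=
  strictAnti_nat_of_succ_lt fun k ↦
    (h.succ_le_mul hr0 hc (hpos k).le).trans_lt (mul_lt_of_lt_one_left (hpos k) hr1)

end OrderedRing

variable {r c : ℝ} {d : ℕ → ℝ}

theorem summable (h : IsQuadraticOrbit r c d) (hr0 : 0 ≤ r) (hr1 : r < 1) (hc : 0 ≤ c)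
    (hnonneg : ∀ k, 0 ≤ d k) : Summable d :=
  .of_nonneg_of_le hnonneg
    (fun n ↦ le_geom hr0 n fun k _ ↦ h.succ_le_mul hr0 hc (hnonneg k))
    ((summable_geometric_of_lt_one hr0 hr1).mul_right (d 0))

theorem exists_pos_tendsto_div_pow (h : IsQuadraticOrbit r c d) (hr : r ≠ 0) (hd0 : 0 < d 0)
    (hlt : ∀ k, c * d k < 1) (hd : Summable d) :
    ∃ L, 0 < L ∧ Tendsto (fun k ↦ d k / r ^ k) atTop (𝓝 L) := by
  have hsum : Summable fun k ↦ -(c * d k) := (hd.mul_left c).neg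
  have hpos (k : ℕ) : 0 < 1 + -(c * d k) := by linarith [hlt k]
  refine ⟨d 0 * ∏' k, (1 + -(c * d k)),
    mul_pos hd0 (tprod_one_add_pos_of_summable hsum hpos),
    tendsto_div_pow_of_multipliable hr (fun k ↦ ?_) (Real.multipliable_one_add_of_summable hsum)⟩
  rw [h k, sub_eq_add_neg]

end IsQuadraticOrbit

theorem stmt_16 (lam : ℝ) (hlam1 : 1 < lam) (hlam2 : lam < 2)
    (μ : ℝ) (hμ : μ = (lam - 1) / lam)
    (x : ℕ → ℝ) (hrec : ∀ k, x (k + 1) = lam * x k * (1 - x k))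
    (hx0 : μ < x 0) (hx0' : x 0 < 1 - μ) :
    StrictAnti x ∧ (∀ k, μ < x k) ∧ Tendsto x atTop (𝓝 μ) ∧
    ∃ L : ℝ, 0 < L ∧
      Tendsto (fun k : ℕ => (x k - μ) / (2 - lam)^k) atTop (𝓝 L) := by
  have hlam0 : 0 < lam := by linarith
  have hr0 : 0 < 2 - lam := by linarith
  have hr1 : 2 - lam < 1 := by linarith
  have hfixed : lam * (1 * μ) = lam - 1 := by rw [one_mul, hμ, mul_div_cancel₀ _ hlam0.ne']
  have hx : IsQuadraticOrbit lam 1 x := fun k ↦ by rw [hrec, one_mul]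
  have horbit := hx.sub_fixedPoint hfixed hr0.ne'
  have hc : 0 ≤ lam * 1 / (2 - lam) := by positivity
  have hcd0 : lam * 1 / (2 - lam) * (x 0 - μ) < 1 := by
    have hmul : lam * x 0 < lam * (1 - μ) := mul_lt_mul_of_pos_left hx0' hlam0
    rw [div_mul_eq_mul_div, div_lt_one hr0]
    linarith
  have hbounds := horbit.pos_and_mul_lt_one hr0 hr1.le hc (sub_pos.2 hx0) hcd0
  have hpos (k : ℕ) : 0 < x k - μ := (hbounds k).1
  have hsum := horbit.summable hr0.le hr1 hc fun k ↦ (hpos k).le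
  have hanti := horbit.strictAnti hr0.le hr1 hc hpos
  exact ⟨fun _ _ hij ↦ (sub_lt_sub_iff_right μ).1 (hanti hij), fun k ↦ sub_pos.1 (hpos k),
    tendsto_sub_nhds_zero_iff.1 hsum.tendsto_atTop_zero,
    horbit.exists_pos_tendsto_div_pow hr0.ne' (hpos 0) (fun k ↦ (hbounds k).2) hsum⟩
end
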